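/- arXiv:2401.06784 — 2 statements merged into one kernel-verified Lean document; each statement's English description precedes it below -/
import Mathlib

section
/- Let (p,q) be admissible. If the curve EF1: y² = x³ + (p²+q²)²x² + 4p²q²(p²−q²)²x has only finitely many rational points, then there is no Euler brick (a,b,c) with a·2pq = b·(p²−q²), i.e. no Euler brick has a face with aspect ratio (p²−q²):2pq. -/
/-!
Put `A = p² - q²` and `B = 2pq`. The curve EF1 is `y² = x (x + A²) (x + B²)`, and a brick with
sides `k A`, `k B`, `c` gives a rational point on it with `x = (c / k)²`. Suppose that the group of
rational points is finite. Doubling turns a nonzero square `x` into a nonzero square: if it became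
zero, `|A B|` would be a square like `A² + B²`, against Fermat's theorem on `u⁴ + v⁴ = z²`. So the
order of the point is not a power of two, and there is a nonzero point of odd order.

Among these choose `V` for which `x(V)` has the largest denominator. The denominator is then the
same, `w²`, for `2V`, `4V`, and for `3V` if it is nonzero. If `a / w`, `b / w`, `c / w` are the
square roots of `x`, `x + A²`, `x + B²` at a point and `t / w`, `r / w`, `s / w` those at its
double, the duplication formula reads
`(t + r) (t + s) = a²`, `(t + r) (r + s) = b²`, `(t + s) (r + s) = c²`,
and the three sums are squares because `a`, `b`, `c` have no common factor. Two consecutive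
doublings then give `x(2V) w² = 4 m⁴` and `|y(2V)| w³ = k²` with integers `m` and `k`.

If `3V = 0`, the roots at `4V` and at `2V` coincide up to the sign of the first, which produces
integers `μ`, `ν` such that `μ² + ν²` and `μ² + 4 ν²` are both squares; Euler showed that there are
none. Otherwise `x(6V) - x(2V) = -4 y(4V) y(2V) / (x(4V) - x(2V))²` says that a nonzero difference
of two fourth powers is a square up to sign; Fermat showed that there is none.
-/


/-- The elliptic curve EF1: `y² = x³ + (p²+q²)²x² + 4p²q²(p²−q²)²x`, as a set of
rational points. -/
def EF1 (p q : ℤ) : Set (ℚ × ℚ) :=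
  {P | P.2 ^ 2 = P.1 ^ 3 + ((p : ℚ) ^ 2 + (q : ℚ) ^ 2) ^ 2 * P.1 ^ 2 +
    4 * (p : ℚ) ^ 2 * (q : ℚ) ^ 2 * ((p : ℚ) ^ 2 - (q : ℚ) ^ 2) ^ 2 * P.1}

/-! ### Sums and differences of squares -/

lemma isSquare_of_isSquare_sq_mul {x y : ℤ} (hx : x ≠ 0) (h : IsSquare (x ^ 2 * y)) :
    IsSquare y := by
  obtain ⟨z, hz⟩ := h
  obtain ⟨w, rfl⟩ : x ∣ z := (Int.pow_dvd_pow_iff two_ne_zero).mp ⟨y, by rw [sq z, hz]⟩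
  exact ⟨w, mul_left_cancel₀ (pow_ne_zero 2 hx) (by rw [hz]; ring)⟩

lemma exists_pos_sq_eq_of_isSquare {x : ℤ} (h : IsSquare x) (hx : x ≠ 0) :
    ∃ r, 0 < r ∧ r ^ 2 = x := by
  obtain ⟨r, rfl⟩ := h
  exact ⟨|r|, abs_pos.mpr (left_ne_zero_of_mul hx), by rw [sq_abs, pow_two]⟩

lemma exists_pos_eq_sq_of_isSquare_mul {x y z : ℤ} (hx : 0 < x) (hy : IsSquare (x * y))
    (hz : IsSquare (x * z)) (h : ∀ p : ℤ, Prime p → p ∣ x → p ∣ y → ¬ p ∣ z) :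
    ∃ m, 0 < m ∧ x = m ^ 2 := by
  obtain ⟨u, hu⟩ := hy
  obtain ⟨v, hv⟩ := hz
  have hcop : IsCoprime x (Int.gcd y z) :=
    isCoprime_of_prime_dvd (fun h0 => hx.ne' h0.1) fun p hp hpx hpg =>
      h p hp hpx (hpg.trans (Int.gcd_dvd_left ..)) (hpg.trans (Int.gcd_dvd_right ..))
  have hmul : x * Int.gcd y z = (Int.gcd u v : ℤ) ^ 2 := by
    rw [← Int.natAbs_of_nonneg hx.le]
    norm_cast
    rw [← Int.gcd_mul_left, hu, hv, ← sq, ← sq, Int.pow_gcd_pow]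
  obtain ⟨m, hm | hm⟩ := Int.sq_of_isCoprime hcop hmul
  · obtain ⟨r, hr, hrm⟩ := exists_pos_sq_eq_of_isSquare ⟨m, by rw [hm, sq]⟩ hx.ne'
    exact ⟨r, hr, hrm.symm⟩
  · nlinarith [sq_nonneg m]

lemma exists_pos_eq_sq_of_isCoprime_of_isSquare_mul {x y : ℤ} (h : IsCoprime x y) (hx : 0 < x)
    (hxy : IsSquare (x * y)) : ∃ m, 0 < m ∧ x = m ^ 2 :=
  exists_pos_eq_sq_of_isSquare_mul hx hxy hxy fun _ hp hpx hpy _ =>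
    hp.not_isUnit (h.isUnit_of_dvd' hpx hpy)

lemma exists_eq_sq_sub_sq_of_sq_add_sq {x y z : ℤ} (h : x ^ 2 + y ^ 2 = z ^ 2)
    (hxy : IsCoprime x y) (hx : Odd x) (hx0 : 0 < x) (hy0 : 0 < y) (hz0 : 0 < z) :
    ∃ m n, 0 < n ∧ n < m ∧ IsCoprime m n ∧ Odd (m + n) ∧
      x = m ^ 2 - n ^ 2 ∧ y = 2 * m * n ∧ z = m ^ 2 + n ^ 2 := by
  have hT : PythagoreanTriple x y z := by unfold PythagoreanTriple; linarith
  obtain ⟨m, n, rfl, rfl, rfl, hmn, hpar, hm⟩ := hT.coprime_classification'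
    (Int.isCoprime_iff_gcd_eq_one.mp hxy) (Int.odd_iff.mp hx) hz0
  have hn : 0 < n := by
    by_contra! hn
    nlinarith [mul_nonneg hm (neg_nonneg.mpr hn)]
  refine ⟨m, n, hn, by nlinarith, Int.isCoprime_iff_gcd_eq_one.mpr hmn, ?_, rfl, rfl, rfl⟩
  rw [Int.odd_iff]
  lia

/-- Nontrivial solutions of `x ^ 4 - y ^ 4 = z ^ 2`, normalized by signs, for the infinite descent
showing that there are none. -/
structure IsSquareSubPowFour (x y : ℤ) : Prop where
  pos : 0 < y
  lt : y < x
  isSquare : IsSquare (x ^ 4 - y ^ 4)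

namespace IsSquareSubPowFour

variable {x y : ℤ}

lemma exists_isCoprime (h : IsSquareSubPowFour x y) :
    ∃ x' y', IsSquareSubPowFour x' y' ∧ IsCoprime x' y' ∧ x' ≤ x := by
  obtain ⟨hy, hyx, hsq⟩ := h
  obtain ⟨g, x', y', hg, hcop, rfl, rfl⟩ :=
    Int.exists_gcd_one' (Int.gcd_pos_of_ne_zero_right x hy.ne')
  have hg' : (0 : ℤ) < g := by exact_mod_cast hg
  have hy' : 0 < y' := pos_of_mul_pos_left hy hg'.le
  have hlt : y' < x' := lt_of_mul_lt_mul_right hyx hg'.le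
  refine ⟨x', y', ⟨hy', hlt, isSquare_of_isSquare_sq_mul (pow_ne_zero 2 hg'.ne') ?_⟩,
    Int.isCoprime_iff_gcd_eq_one.mpr hcop, le_mul_of_one_le_right (by linarith) hg'⟩
  convert hsq using 1
  ring

lemma exists_sq_add_sq (h : IsSquareSubPowFour x y) (hxy : IsCoprime x y) :
    ∃ z, 0 < z ∧ (y ^ 2) ^ 2 + z ^ 2 = (x ^ 2) ^ 2 ∧ IsCoprime (y ^ 2) z := by
  have hlt := pow_lt_pow_left₀ h.lt h.pos.le four_ne_zero
  obtain ⟨z, hz, hzsq⟩ := exists_pos_sq_eq_of_isSquare h.isSquare (by linarith)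
  have hsum : (y ^ 2) ^ 2 + z ^ 2 = (x ^ 2) ^ 2 := by rw [hzsq]; ring
  refine ⟨z, hz, hsum, (IsCoprime.pow_right_iff two_pos).mp ?_⟩
  rw [← IsCoprime.mul_add_left_right_iff (z := y ^ 2), ← sq, hsum]
  exact hxy.symm.pow.pow_right

lemma descent_of_odd (h : IsSquareSubPowFour x y) (hxy : IsCoprime x y) (hy : Odd y) :
    ∃ x' y', IsSquareSubPowFour x' y' ∧ x' < x := by
  have hx0 : 0 < x := h.pos.trans h.lt
  obtain ⟨z, hz, hsum, hcop⟩ := h.exists_sq_add_sq hxy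
  obtain ⟨m, n, hn, hnm, -, -, hm2, -, hx2⟩ :=
    exists_eq_sq_sub_sq_of_sq_add_sq hsum hcop hy.pow (pow_pos h.pos 2) hz (pow_pos hx0 2)
  refine ⟨m, n, ⟨hn, hnm, x * y, ?_⟩, by nlinarith⟩
  linear_combination -y ^ 2 * hx2 - (m ^ 2 + n ^ 2) * hm2

lemma exists_of_pow_four_add {a b : ℤ} (h : b ^ 4 + 4 * a ^ 4 = x ^ 2) (ha : 0 < a) (hb : 0 < b)
    (hx : 0 < x) (hodd : Odd b) (hab : IsCoprime b a) :
    ∃ x' y', IsSquareSubPowFour x' y' ∧ x' < x := by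
  have hcop : IsCoprime (b ^ 2) (2 * a ^ 2) :=
    .mul_right (Int.isCoprime_two_right.mpr hodd.pow) hab.pow
  obtain ⟨m, n, hn, hnm, hmn, -, hb2, ha2, rfl⟩ :=
    exists_eq_sq_sub_sq_of_sq_add_sq (by linarith) hcop hodd.pow (pow_pos hb 2)
      (by positivity) hx
  have hsq : m * n = a * a := by linarith
  obtain ⟨P, hP, rfl⟩ := exists_pos_eq_sq_of_isCoprime_of_isSquare_mul hmn (hn.trans hnm) ⟨a, hsq⟩
  obtain ⟨Q, hQ, rfl⟩ :=
    exists_pos_eq_sq_of_isCoprime_of_isSquare_mul hmn.symm hn ⟨a, by rw [mul_comm, hsq]⟩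
  exact ⟨P, Q, ⟨hQ, lt_of_pow_lt_pow_left₀ 2 hP.le hnm, b, by linarith⟩, by nlinarith⟩

lemma descent_of_even (h : IsSquareSubPowFour x y) (hxy : IsCoprime x y) (hy : Even y) :
    ∃ x' y', IsSquareSubPowFour x' y' ∧ x' < x := by
  have hx0 : 0 < x := h.pos.trans h.lt
  have hx : Odd x := by
    obtain ⟨k, rfl⟩ := hy.two_dvd
    exact Int.isCoprime_two_right.mp hxy.of_mul_right_left
  obtain ⟨z, hz, hsum, hcop⟩ := h.exists_sq_add_sq hxy
  have hzodd : Odd z := by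
    rw [← Int.odd_pow' two_ne_zero, show z ^ 2 = x ^ 4 - y ^ 4 by linarith]
    exact hx.pow.sub_even (hy.pow_of_ne_zero four_ne_zero)
  obtain ⟨m, n, hn, hnm, hmn, hpar, -, hy2, hx2⟩ := exists_eq_sq_sub_sq_of_sq_add_sq
    (by linarith) hcop.symm hzodd hz (pow_pos h.pos 2) (pow_pos hx0 2)
  have descent_of_factors : ∀ e o : ℤ, 0 < 2 * e → 0 < o → Odd o → IsCoprime (2 * e) o →
      y ^ 2 = 4 * (e * o) → x ^ 2 = (2 * e) ^ 2 + o ^ 2 →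
      ∃ x' y', IsSquareSubPowFour x' y' ∧ x' < x := by
    intro e o he ho hodd hco hye hxe
    obtain ⟨k, rfl⟩ := hy.two_dvd
    have hk : e * o = k * k := by linarith
    have hco' := hco.of_mul_left_right
    obtain ⟨a, ha, rfl⟩ := exists_pos_eq_sq_of_isCoprime_of_isSquare_mul hco' (by linarith) ⟨k, hk⟩
    obtain ⟨b, hb, rfl⟩ := exists_pos_eq_sq_of_isCoprime_of_isSquare_mul hco'.symm ho
      ⟨k, by rw [mul_comm, hk]⟩
    exact exists_of_pow_four_add (by linarith) ha hb hx0 ((Int.odd_pow' two_ne_zero).mp hodd)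
      ((IsCoprime.pow_iff two_pos two_pos).mp hco'.symm)
  rcases Int.even_or_odd m with hm | hm
  · obtain ⟨e, rfl⟩ := hm.two_dvd
    exact descent_of_factors e n (hn.trans hnm) hn ((Int.odd_add'.mp hpar).mpr hm) hmn
      (by linarith) hx2
  · obtain ⟨e, rfl⟩ := ((Int.odd_add.mp hpar).mp hm).two_dvd
    exact descent_of_factors e m hn (hn.trans hnm) hm hmn.symm (by linarith) (by linarith)

lemma descent (h : IsSquareSubPowFour x y) : ∃ x' y', IsSquareSubPowFour x' y' ∧ x' < x := by
  obtain ⟨u, v, huv, hcop, hux⟩ := h.exists_isCoprime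
  obtain ⟨x', y', h', hlt⟩ := (Int.even_or_odd v).elim (huv.descent_of_even hcop)
    (huv.descent_of_odd hcop)
  exact ⟨x', y', h', hlt.trans_le hux⟩

end IsSquareSubPowFour

lemma not_isSquareSubPowFour (x y : ℤ) : ¬ IsSquareSubPowFour x y := by
  intro h
  induction hn : x.toNat using Nat.strong_induction_on generalizing x y with
  | _ n ih =>
    obtain ⟨x', y', h', hlt⟩ := h.descent
    exact ih x'.toNat (by have := h'.pos.trans h'.lt; lia) x' y' h' rfl

theorem not_isSquare_pow_four_sub_pow_four {x y : ℤ} (hy : y ≠ 0) (h : x ^ 4 ≠ y ^ 4) :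
    ¬ IsSquare (x ^ 4 - y ^ 4) := by
  intro hsq
  have hlt : y ^ 4 < x ^ 4 :=
    lt_of_le_of_ne (sub_nonneg.mp hsq.nonneg) h.symm
  refine not_isSquareSubPowFour |x| |y| ⟨abs_pos.mpr hy, ?_, ?_⟩
  · refine lt_of_pow_lt_pow_left₀ 4 (abs_nonneg x) ?_
    rwa [Even.pow_abs (by decide), Even.pow_abs (by decide)]
  · rwa [Even.pow_abs (by decide), Even.pow_abs (by decide)]

lemma not_isSquare_abs_pow_four_sub_pow_four {x y : ℤ} (hx : x ≠ 0) (hy : y ≠ 0)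
    (h : x ^ 4 ≠ y ^ 4) : ¬IsSquare |x ^ 4 - y ^ 4| := by
  rcases abs_choice (x ^ 4 - y ^ 4) with hxy | hxy
  · rw [hxy]
    exact not_isSquare_pow_four_sub_pow_four hy h
  · rw [hxy, neg_sub]
    exact not_isSquare_pow_four_sub_pow_four hx h.symm

lemma exists_sq_eq_of_sq_add_sq_mul_sq {x y m n : ℤ} (hxy : IsCoprime x y) (hmn : IsCoprime m n)
    (hn : n ≠ 0) (hy : y ≠ 0)
    (h : (x ^ 2 + y ^ 2) * m ^ 2 = (x ^ 2 + 4 * y ^ 2) * n ^ 2) :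
    ∃ k, x ^ 2 + y ^ 2 = k * n ^ 2 ∧ x ^ 2 + 4 * y ^ 2 = k * m ^ 2 ∧ (k = 1 ∨ k = 3) := by
  obtain ⟨k, hk⟩ : n ^ 2 ∣ x ^ 2 + y ^ 2 :=
    (IsCoprime.pow hmn.symm).dvd_of_dvd_mul_right ⟨_, h.trans (mul_comm _ _)⟩
  have hk' : x ^ 2 + 4 * y ^ 2 = k * m ^ 2 := by
    refine mul_right_cancel₀ (pow_ne_zero 2 hn) ?_
    rw [← h, hk]
    ring
  have hk0 : 0 < k := by
    have : 0 < k * m ^ 2 := by rw [← hk']; positivity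
    exact pos_of_mul_pos_left this (sq_nonneg m)
  have hdvd : k ∣ 3 := by
    obtain ⟨u, v, huv⟩ : IsCoprime (x ^ 2) (y ^ 2) := hxy.pow
    refine ⟨u * (4 * n ^ 2 - m ^ 2) + v * (m ^ 2 - n ^ 2), ?_⟩
    linear_combination -3 * huv + (4 * u - v) * hk + (v - u) * hk'
  refine ⟨k, by rw [hk, mul_comm], hk', ?_⟩
  have := Int.le_of_dvd three_pos hdvd
  interval_cases k <;> simp_all

lemma not_three_dvd_sq_add_sq {x y : ℤ} (hxy : IsCoprime x y) : ¬ 3 ∣ x ^ 2 + y ^ 2 := by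
  intro h
  have hx : x % 3 = 0 ∧ y % 3 = 0 := by
    rcases (by lia : x % 3 = 0 ∨ x % 3 = 1 ∨ x % 3 = 2) with hx | hx | hx <;>
      rcases (by lia : y % 3 = 0 ∨ y % 3 = 1 ∨ y % 3 = 2) with hy | hy | hy <;>
      simp [Int.dvd_iff_emod_eq_zero, Int.add_emod, pow_two, Int.mul_emod, hx, hy] at h ⊢
  exact Int.prime_three.not_isUnit (hxy.isUnit_of_dvd' (Int.dvd_of_emod_eq_zero hx.1)
    (Int.dvd_of_emod_eq_zero hx.2))

/-- Solutions of Euler's concordant forms problem for `x ^ 2 + y ^ 2` and `x ^ 2 + 4 * y ^ 2`,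
normalized by signs, for the infinite descent showing that there are none. -/
structure IsConcordant (x y : ℤ) : Prop where
  pos_left : 0 < x
  pos_right : 0 < y
  isSquare_add : IsSquare (x ^ 2 + y ^ 2)
  isSquare_add_four_mul : IsSquare (x ^ 2 + 4 * y ^ 2)

namespace IsConcordant

variable {x y : ℤ}

lemma exists_isCoprime (h : IsConcordant x y) :
    ∃ x' y', IsConcordant x' y' ∧ IsCoprime x' y' ∧ x' * y' ≤ x * y := by
  obtain ⟨hx, hy, hsq₁, hsq₂⟩ := h
  obtain ⟨g, x', y', hg, hcop, rfl, rfl⟩ :=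
    Int.exists_gcd_one' (Int.gcd_pos_of_ne_zero_right x hy.ne')
  have hg' : (0 : ℤ) < g := by exact_mod_cast hg
  have hx' : 0 < x' := pos_of_mul_pos_left hx hg'.le
  have hy' : 0 < y' := pos_of_mul_pos_left hy hg'.le
  refine ⟨x', y', ⟨hx', hy', isSquare_of_isSquare_sq_mul hg'.ne' ?_,
    isSquare_of_isSquare_sq_mul hg'.ne' ?_⟩, Int.isCoprime_iff_gcd_eq_one.mpr hcop,
    mul_le_mul (le_mul_of_one_le_right hx'.le hg') (le_mul_of_one_le_right hy'.le hg') hy'.le hx.le⟩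
  · convert hsq₁ using 1
    ring
  · convert hsq₂ using 1
    ring

lemma descent_of_even (h : IsConcordant x y) (hx : Even x) :
    ∃ x' y', IsConcordant x' y' ∧ x' * y' < x * y := by
  obtain ⟨k, rfl⟩ := hx.two_dvd
  have hk : 0 < k := pos_of_mul_pos_right h.pos_left two_pos.le
  have hy := h.pos_right
  refine ⟨y, k, ⟨hy, hk, ?_, ?_⟩, by nlinarith [mul_pos hk hy]⟩
  · refine isSquare_of_isSquare_sq_mul two_ne_zero ?_
    convert h.isSquare_add_four_mul using 1
    ring
  · convert h.isSquare_add using 1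
    ring

lemma of_sq_add_sq_mul_sq {m n : ℤ} (hxy : IsCoprime x y) (hmn : IsCoprime m n) (hx : x ≠ 0)
    (hy : y ≠ 0) (hn : n ≠ 0)
    (h : (x ^ 2 + y ^ 2) * m ^ 2 = (x ^ 2 + 4 * y ^ 2) * n ^ 2) : IsConcordant |x| |y| := by
  obtain ⟨k, hk₁, hk₂, rfl | rfl⟩ := exists_sq_eq_of_sq_add_sq_mul_sq hxy hmn hn hy h
  · refine ⟨abs_pos.mpr hx, abs_pos.mpr hy, ⟨n, ?_⟩, ⟨m, ?_⟩⟩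
    · rw [sq_abs, sq_abs, hk₁]
      ring
    · rw [sq_abs, sq_abs, hk₂]
      ring
  · exact absurd (Dvd.intro _ hk₁.symm) (not_three_dvd_sq_add_sq hxy)

lemma exists_of_mul_eq_two_mul {a b c d : ℤ} (hab : IsCoprime a b) (ha : 0 < a) (hb : 0 < b)
    (hmul : a * b = 2 * c * d) (hsq : a ^ 2 - b ^ 2 = c ^ 2 - d ^ 2) :
    ∃ x y, IsConcordant x y ∧ x * y < a * b := by
  -- Euler's four numbers: `a = X Y`, `b = Z W`, `c = X Z`, `2 d = Y W`.
  obtain ⟨X, Y, ⟨Z, rfl⟩, ⟨W, hW⟩, rfl⟩ : ∃ X Y, X ∣ c ∧ Y ∣ 2 * d ∧ a = X * Y := by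
    have : a ∣ c * (2 * d) := ⟨b, by rw [hmul]; ring⟩
    obtain ⟨X, Y, hX, hY, rfl⟩ := exists_dvd_and_dvd_of_dvd_mul this
    exact ⟨X, Y, hX, hY, rfl⟩
  obtain rfl : b = Z * W := by
    refine mul_left_cancel₀ ha.ne' (hmul.trans ?_)
    linear_combination X * Z * hW
  obtain ⟨hX, hY⟩ := mul_ne_zero_iff.mp ha.ne'
  obtain ⟨hZ, hW0⟩ := mul_ne_zero_iff.mp hb.ne'
  have hXW : IsCoprime X W := hab.of_mul_left_left.of_mul_right_right
  have hYZ : IsCoprime Y Z := hab.of_mul_left_right.of_mul_right_left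
  have hlt {r s : ℤ} (hr : r ≠ 0) (hs : s ≠ 0) (h : X * Y * (Z * W) = 2 * (r * s)) :
      |r| < X * Y * (Z * W) := by
    rw [← abs_of_pos (mul_pos ha hb), h, abs_mul, abs_mul, abs_two]
    nlinarith [Int.one_le_abs hr, Int.one_le_abs hs]
  rcases Int.prime_two.dvd_or_dvd (Dvd.intro d hW) with ⟨Y', rfl⟩ | ⟨W', rfl⟩
  · obtain rfl : d = Y' * W := by linarith
    have hY' := right_ne_zero_of_mul hY
    refine ⟨|W|, |X|, of_sq_add_sq_mul_sq hXW.symm hYZ.of_mul_left_right.symm hW0 hX hY' ?_, ?_⟩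
    · linear_combination -hsq
    · rw [← abs_mul]
      exact hlt (mul_ne_zero hW0 hX) (mul_ne_zero hY' hZ) (by ring)
  · obtain rfl : d = Y * W' := by linarith
    have hW' := right_ne_zero_of_mul hW0
    refine ⟨|X|, |W'|, of_sq_add_sq_mul_sq hXW.of_mul_right_right hYZ hX hW' hZ ?_, ?_⟩
    · linear_combination hsq
    · rw [← abs_mul]
      exact hlt (mul_ne_zero hX hW') (mul_ne_zero hY hZ) (by ring)

lemma descent_of_odd (h : IsConcordant x y) (hxy : IsCoprime x y) (hx : Odd x) :
    ∃ x' y', IsConcordant x' y' ∧ x' * y' < x * y := by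
  obtain ⟨hx0, hy0, hsq₁, hsq₂⟩ := h
  obtain ⟨u, hu, hu2⟩ := exists_pos_sq_eq_of_isSquare hsq₁ (by positivity)
  obtain ⟨v, hv, hv2⟩ := exists_pos_sq_eq_of_isSquare hsq₂ (by positivity)
  obtain ⟨c, d, -, -, -, -, hxcd, hycd, -⟩ :=
    exists_eq_sq_sub_sq_of_sq_add_sq hu2.symm hxy hx hx0 hy0 hu
  obtain ⟨a, b, hb, hba, hab, -, hxab, hyab, -⟩ := exists_eq_sq_sub_sq_of_sq_add_sq
    (show x ^ 2 + (2 * y) ^ 2 = v ^ 2 by linarith)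
    ((Int.isCoprime_two_right.mpr hx).mul_right hxy) hx hx0 (by positivity) hv
  obtain rfl : y = a * b := by linarith
  obtain ⟨x', y', h', hlt⟩ :=
    exists_of_mul_eq_two_mul hab (hb.trans hba) hb hycd (hxab.symm.trans hxcd)
  exact ⟨x', y', h', hlt.trans_le (le_mul_of_one_le_left hy0.le hx0)⟩

lemma descent (h : IsConcordant x y) : ∃ x' y', IsConcordant x' y' ∧ x' * y' < x * y := by
  obtain ⟨u, v, huv, hcop, hle⟩ := h.exists_isCoprime
  obtain ⟨x', y', h', hlt⟩ := (Int.even_or_odd u).elim huv.descent_of_even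
    (huv.descent_of_odd hcop)
  exact ⟨x', y', h', hlt.trans_le hle⟩

end IsConcordant

theorem not_isConcordant (x y : ℤ) : ¬ IsConcordant x y := by
  intro h
  induction hn : (x * y).toNat using Nat.strong_induction_on generalizing x y with
  | _ n ih =>
    obtain ⟨x', y', h', hlt⟩ := h.descent
    exact ih (x' * y').toNat (by have := mul_pos h.pos_left h.pos_right; lia) x' y' h' rfl

/-! ### Roots of a point and of its double -/

/-- A nonzero integer `a` for which `a ^ 2 + D ^ 2` and `a ^ 2 + E ^ 2` are squares, with their
positive square roots `b` and `c`, such that `a`, `b`, `c` have no common prime factor.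
The sign of `a` is left free, since the doubling formula determines it. -/
structure IsRootTriple (D E a b c : ℤ) : Prop where
  ne_zero : a ≠ 0
  pos₂ : 0 < b
  pos₃ : 0 < c
  sq₂ : b ^ 2 = a ^ 2 + D ^ 2
  sq₃ : c ^ 2 = a ^ 2 + E ^ 2
  not_dvd : ∀ p : ℤ, Prime p → p ∣ a → p ∣ b → ¬ p ∣ c

/-- The relation between the root triple `(a, b, c)` of a point and the root triple `(t, r, s)` of
its double, over the same denominator. -/
structure IsDouble (a b c t r s : ℤ) : Prop where
  sq₁ : (t + r) * (t + s) = a ^ 2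
  sq₂ : (t + r) * (r + s) = b ^ 2
  sq₃ : (t + s) * (r + s) = c ^ 2

lemma exists_eq_sq_of_isSquare_mul_add_of_isSquare_mul_sub {m n l : ℤ} (hm : 0 < m)
    (hodd : Odd m) (hml : IsCoprime m l) (hadd : IsSquare (m * (l + n)))
    (hsub : IsSquare (m * (l - n))) : ∃ μ, 0 < μ ∧ m = μ ^ 2 := by
  refine exists_pos_eq_sq_of_isSquare_mul hm hadd hsub fun p hp hpm h₁ h₂ => hp.not_isUnit ?_
  have hpl : p ∣ 2 * l := by
    rw [show 2 * l = (l + n) + (l - n) by ring]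
    exact dvd_add h₁ h₂
  exact ((Int.isCoprime_two_right.mpr hodd).mul_right hml).isUnit_of_dvd' hpm hpl

lemma exists_eq_two_mul_sq_of_isSquare_mul_add_of_isSquare_mul_sub {m n l : ℤ} (hn : 0 < n)
    (hm : Odd m) (hl : Odd l) (hml : IsCoprime m l) (hadd : IsSquare (n * (l + m)))
    (hsub : IsSquare (n * (l - m))) : ∃ ν, 0 < ν ∧ n = 2 * ν ^ 2 := by
  obtain ⟨x, hx⟩ := hl.add_odd hm
  obtain ⟨y, hy⟩ := hl.sub_odd hm
  have hnx : 2 * n * x = n * (l + m) := by rw [hx]; ring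
  have hny : 2 * n * y = n * (l - m) := by rw [hy]; ring
  obtain ⟨κ, hκ, hnκ⟩ := exists_pos_eq_sq_of_isSquare_mul (by positivity) (hnx ▸ hadd) (hny ▸ hsub)
    fun p hp _ hpx hpy => hp.not_isUnit <| by
      rw [show m = x - y by lia, show l = x + y by lia] at hml
      exact hml.isUnit_of_dvd' (dvd_sub hpx hpy) (dvd_add hpx hpy)
  obtain ⟨ν, rfl⟩ : 2 ∣ κ := Int.prime_two.dvd_of_dvd_pow (Dvd.intro n hnκ)
  exact ⟨ν, by linarith, by linarith⟩

lemma IsRootTriple.odd_and_odd {D E a b c m n l : ℤ} (h : IsRootTriple D E a b c) (hE : Even E)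
    (ha : |a| = m * n) (hb : b = m * l) (hc : c = n * l) (hsum : Even (m ^ 2 + n ^ 2 + l ^ 2)) :
    Odd m ∧ Odd l := by
  have hE2 : Even ((n * l) ^ 2 + (m * n) ^ 2) := by
    rw [← hc, ← ha, sq_abs, h.sq₃]
    exact ⟨a ^ 2 + E ^ 2 / 2, by have := (hE.pow_of_ne_zero two_ne_zero).two_dvd; lia⟩
  have htwo : ¬ (Even n ∧ Even l) := fun ⟨hn, hl⟩ =>
    h.not_dvd 2 Int.prime_two ((dvd_abs _ _).mp (ha ▸ hn.two_dvd.mul_left _))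
      (hb ▸ hl.two_dvd.mul_left _) (hc ▸ hl.two_dvd.mul_left _)
  simp only [← Int.not_even_iff_odd]
  simp only [Int.even_add, Int.even_pow' two_ne_zero, Int.even_mul] at hsum hE2
  tauto

namespace IsDouble

variable {D E a b c t r s : ℤ}

lemma exists_eq_sq (hd : IsDouble a b c t r s) (h : IsRootTriple D E a b c) (hrs : 0 < r + s) :
    ∃ m n l, 0 < m ∧ 0 < n ∧ 0 < l ∧ t + r = m ^ 2 ∧ t + s = n ^ 2 ∧ r + s = l ^ 2 ∧
      |a| = m * n ∧ b = m * l ∧ c = n * l := by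
  have htr : 0 < t + r := pos_of_mul_pos_left (hd.sq₂ ▸ pow_pos h.pos₂ 2) hrs.le
  have hts : 0 < t + s := pos_of_mul_pos_left (hd.sq₃ ▸ pow_pos h.pos₃ 2) hrs.le
  have not_dvd (p : ℤ) (hp : Prime p) (h₁ : p ∣ t + r) (h₂ : p ∣ t + s) : ¬ p ∣ r + s := fun h₃ =>
    h.not_dvd p hp (hp.dvd_of_dvd_pow (hd.sq₁ ▸ h₁.mul_right _))
      (hp.dvd_of_dvd_pow (hd.sq₂ ▸ h₁.mul_right _)) (hp.dvd_of_dvd_pow (hd.sq₃ ▸ h₃.mul_left _))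
  obtain ⟨m, hm, htrm⟩ := exists_pos_eq_sq_of_isSquare_mul htr ⟨a, by rw [hd.sq₁, pow_two]⟩
    ⟨b, by rw [hd.sq₂, pow_two]⟩ not_dvd
  obtain ⟨n, hn, htsn⟩ := exists_pos_eq_sq_of_isSquare_mul hts
    ⟨a, by rw [mul_comm, hd.sq₁, pow_two]⟩ ⟨c, by rw [hd.sq₃, pow_two]⟩
    fun p hp h₁ h₂ => not_dvd p hp h₂ h₁
  obtain ⟨l, hl, hrsl⟩ := exists_pos_eq_sq_of_isSquare_mul hrs
    ⟨b, by rw [mul_comm, hd.sq₂, pow_two]⟩ ⟨c, by rw [mul_comm, hd.sq₃, pow_two]⟩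
    fun p hp h₁ h₂ h₃ => not_dvd p hp h₂ h₃ h₁
  refine ⟨m, n, l, hm, hn, hl, htrm, htsn, hrsl, ?_, ?_, ?_⟩
  · rw [← pow_left_inj₀ (abs_nonneg a) (by positivity) two_ne_zero, sq_abs, ← hd.sq₁, htrm, htsn]
    ring
  · rw [← pow_left_inj₀ h.pos₂.le (by positivity) two_ne_zero, ← hd.sq₂, htrm, hrsl]
    ring
  · rw [← pow_left_inj₀ h.pos₃.le (by positivity) two_ne_zero, ← hd.sq₃, htsn, hrsl]
    ring

/-- The sign of the first root of a double is immaterial here: `b + a` and `c + a` are squares, and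
so are `b - a` and `c - a` because `b ^ 2 - a ^ 2` and `c ^ 2 - a ^ 2` are. -/
lemma isSquare_add_abs {u v w : ℤ} (hd : IsDouble u v w a b c) (hu : IsRootTriple D E u v w)
    (h : IsRootTriple D E a b c) :
    (IsSquare (b + |a|) ∧ IsSquare (b - |a|)) ∧ IsSquare (c + |a|) ∧ IsSquare (c - |a|) := by
  obtain ⟨m, n, -, hm, hn, -, hab, hac, -⟩ := hd.exists_eq_sq hu (add_pos h.pos₂ h.pos₃)
  have hb : IsSquare (b + a) := ⟨m, by linarith⟩
  have hc : IsSquare (c + a) := ⟨n, by linarith⟩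
  have hb' : IsSquare (b - a) :=
    isSquare_of_isSquare_sq_mul hm.ne' ⟨D, by linear_combination h.sq₂ - (b - a) * hab⟩
  have hc' : IsSquare (c - a) :=
    isSquare_of_isSquare_sq_mul hn.ne' ⟨E, by linear_combination h.sq₃ - (c - a) * hac⟩
  rcases abs_cases a with ⟨ha, -⟩ | ⟨ha, -⟩
  · rw [ha]
    exact ⟨⟨hb, hb'⟩, hc, hc'⟩
  · rw [ha, sub_neg_eq_add, sub_neg_eq_add]
    exact ⟨⟨hb', hb⟩, hc', hc⟩

lemma exists_eq_mul_sq {u v w : ℤ} (hE : Even E) (hu : IsRootTriple D E u v w)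
    (hd : IsDouble u v w a b c) (h : IsRootTriple D E a b c) (hd' : IsDouble a b c t r s)
    (hrs : 0 < r + s) :
    ∃ μ ν l, 0 < μ ∧ 0 < ν ∧ 0 < l ∧ |a| = 2 * (μ * ν) ^ 2 ∧ b = μ ^ 2 * l ∧ c = 2 * ν ^ 2 * l ∧
      r + s = l ^ 2 := by
  obtain ⟨m, n, l, hm, hn, hl, htr, hts, hrsl, ha, hb, hc⟩ := hd'.exists_eq_sq h hrs
  obtain ⟨hm2, hl2⟩ := h.odd_and_odd hE ha hb hc ⟨t + r + s, by linarith⟩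
  have hml : IsCoprime m l :=
    isCoprime_of_prime_dvd (fun h0 => hm.ne' h0.1) fun p hp hpm hpl =>
      h.not_dvd p hp ((dvd_abs _ _).mp (ha ▸ hpm.mul_right _)) (hb ▸ hpm.mul_right _)
        (hc ▸ hpl.mul_left _)
  obtain ⟨⟨hb₁, hb₂⟩, hc₁, hc₂⟩ := hd.isSquare_add_abs hu h
  rw [ha, hb, ← mul_add] at hb₁
  rw [ha, hb, ← mul_sub] at hb₂
  rw [ha, hc, mul_comm m, ← mul_add] at hc₁
  rw [ha, hc, mul_comm m, ← mul_sub] at hc₂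
  obtain ⟨μ, hμ, rfl⟩ :=
    exists_eq_sq_of_isSquare_mul_add_of_isSquare_mul_sub hm hm2 hml hb₁ hb₂
  obtain ⟨ν, hν, rfl⟩ :=
    exists_eq_two_mul_sq_of_isSquare_mul_add_of_isSquare_mul_sub hn hm2 hl2 hml hc₁ hc₂
  exact ⟨μ, ν, l, hμ, hν, hl, by rw [ha]; ring, hb, hc, hrsl⟩

lemma not_isDouble_self {u v w : ℤ} (hE : Even E) (hu : IsRootTriple D E u v w)
    (hd : IsDouble u v w a b c) (h : IsRootTriple D E a b c) : ¬ IsDouble a b c t b c := by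
  intro hd'
  obtain ⟨μ, ν, l, hμ, hν, hl, ha, rfl, rfl, hsum⟩ :=
    exists_eq_mul_sq hE hu hd h hd' (add_pos h.pos₂ h.pos₃)
  obtain rfl : l = μ ^ 2 + 2 * ν ^ 2 := by
    refine mul_right_cancel₀ hl.ne' ?_
    linear_combination -hsum
  have ha2 : a ^ 2 = (2 * (μ * ν) ^ 2) ^ 2 := by rw [← ha, sq_abs]
  refine not_isConcordant μ ν ⟨hμ, hν, ?_, ?_⟩
  · refine isSquare_of_isSquare_sq_mul (x := 4 * ν ^ 3) (by positivity) ⟨E, ?_⟩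
    linear_combination h.sq₃ + ha2
  · refine isSquare_of_isSquare_sq_mul (x := μ ^ 3) (by positivity) ⟨D, ?_⟩
    linear_combination h.sq₂ + ha2

end IsDouble

/-- A nonzero element of finite odd order. -/
def IsOddTorsion {G : Type*} [AddMonoid G] (P : G) : Prop :=
  P ≠ 0 ∧ Odd (addOrderOf P)

namespace IsOddTorsion

variable {G : Type*} [AddMonoid G] {P : G}

lemma nsmul (h : IsOddTorsion P) {n : ℕ} (hn : n • P ≠ 0) : IsOddTorsion (n • P) :=
  ⟨hn, h.2.of_dvd_nat (addOrderOf_smul_dvd n)⟩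

lemma two_nsmul_ne_zero (h : IsOddTorsion P) : 2 • P ≠ 0 := fun h0 =>
  h.1 <| AddMonoid.addOrderOf_eq_one_iff.mp <|
    (Nat.dvd_prime Nat.prime_two).mp (addOrderOf_dvd_of_nsmul_eq_zero h0) |>.resolve_right
      fun h2 => absurd h.2 (by rw [h2]; decide)

lemma two_nsmul (h : IsOddTorsion P) : IsOddTorsion (2 • P) :=
  h.nsmul h.two_nsmul_ne_zero

lemma exists_two_nsmul_eq (h : IsOddTorsion P) : ∃ Q, IsOddTorsion Q ∧ 2 • Q = P := by
  obtain ⟨m, hm⟩ := exists_nsmul_eq_self_of_coprime (Nat.coprime_two_left.mpr h.2)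
  rw [← mul_nsmul', mul_nsmul] at hm
  refine ⟨m • P, h.nsmul fun h0 => h.1 ?_, hm⟩
  rw [← hm, h0, nsmul_zero]

end IsOddTorsion

lemma exists_isOddTorsion_of_two_pow_nsmul_ne_zero {G : Type*} [AddGroup G] [Finite G] {P : G}
    (h : ∀ k : ℕ, 2 ^ k • P ≠ 0) : ∃ Q : G, IsOddTorsion Q := by
  obtain ⟨k, m, hm, hkm⟩ := Nat.exists_eq_two_pow_mul_odd (addOrderOf_pos P).ne'
  refine ⟨2 ^ k • P, h k, hm.of_dvd_nat (addOrderOf_dvd_of_nsmul_eq_zero ?_)⟩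
  rw [← mul_nsmul, ← hkm, addOrderOf_nsmul_eq_zero]

/-- The duplication formula in terms of square roots: if `a ^ 2` is the `x`-coordinate of a point on
`y ^ 2 = x * (x + D ^ 2) * (x + E ^ 2)`, then `t ^ 2` is that of its double. -/
lemma exists_add_mul_add_eq_sq {K : Type*} [Field K] [LinearOrder K] [IsStrictOrderedRing K]
    {D E a b c : K} (ha : 0 < a) (hb : 0 < b) (hc : 0 < c)
    (hab : b ^ 2 = a ^ 2 + D ^ 2) (hac : c ^ 2 = a ^ 2 + E ^ 2) :
    ∃ t r s, t * (2 * a * b * c) = a ^ 4 - D ^ 2 * E ^ 2 ∧ 0 < r ∧ 0 < s ∧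
      r ^ 2 = t ^ 2 + D ^ 2 ∧ s ^ 2 = t ^ 2 + E ^ 2 ∧
      (t + r) * (t + s) = a ^ 2 ∧ (t + r) * (r + s) = b ^ 2 ∧ (t + s) * (r + s) = c ^ 2 := by
  have hr : 0 < a ^ 2 * b ^ 2 + b ^ 2 * c ^ 2 - a ^ 2 * c ^ 2 := by
    have : 0 < a ^ 2 * b ^ 2 + c ^ 2 * D ^ 2 := by positivity
    linear_combination this - c ^ 2 * hab
  have hs : 0 < a ^ 2 * c ^ 2 + b ^ 2 * c ^ 2 - a ^ 2 * b ^ 2 := by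
    have : 0 < a ^ 2 * c ^ 2 + b ^ 2 * E ^ 2 := by positivity
    linear_combination this - b ^ 2 * hac
  have hD : D ^ 2 = b ^ 2 - a ^ 2 := by linarith
  have hE : E ^ 2 = c ^ 2 - a ^ 2 := by linarith
  rw [hD, hE]
  refine ⟨(a ^ 2 * b ^ 2 + a ^ 2 * c ^ 2 - b ^ 2 * c ^ 2) / (2 * a * b * c),
    (a ^ 2 * b ^ 2 + b ^ 2 * c ^ 2 - a ^ 2 * c ^ 2) / (2 * a * b * c),
    (a ^ 2 * c ^ 2 + b ^ 2 * c ^ 2 - a ^ 2 * b ^ 2) / (2 * a * b * c), ?_, by positivity,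
    by positivity, ?_, ?_, ?_, ?_, ?_⟩
  all_goals
    field_simp
    ring

/-! ### The curve of a face -/

/-- The affine points of `y ^ 2 = x * (x + A ^ 2) * (x + B ^ 2)`, the analogue of `EF1` for a face
whose sides have ratio `A : B`. -/
def facePoints {F : Type*} [Field F] (A B : F) : Set (F × F) :=
  {P | P.2 ^ 2 = P.1 * (P.1 + A ^ 2) * (P.1 + B ^ 2)}

/-- The curve `y ^ 2 = x * (x + A ^ 2) * (x + B ^ 2)` in Weierstrass form. -/
def faceCurve {F : Type*} [Field F] (A B : F) : WeierstrassCurve.Affine F :=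
  { a₁ := 0, a₂ := A ^ 2 + B ^ 2, a₃ := 0, a₄ := A ^ 2 * B ^ 2, a₆ := 0 }

namespace faceCurve

open WeierstrassCurve

variable {F : Type*} [Field F] {A B : F}

/-- The `x`-coordinate, with the junk value `0` at the point at infinity. -/
def xc : (faceCurve A B).Point → F
  | .zero => 0
  | .some x _ _ => x

/-- The `y`-coordinate, with the junk value `0` at the point at infinity. -/
def yc : (faceCurve A B).Point → F
  | .zero => 0
  | .some _ y _ => y

lemma equation_iff_mem_facePoints {x y : F} :
    (faceCurve A B).Equation x y ↔ (x, y) ∈ facePoints A B := by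
  rw [Affine.equation_iff, facePoints, Set.mem_ofPred_eq]
  simp only [faceCurve]
  constructor <;> intro h <;> linear_combination h

lemma finite_point (h : (facePoints A B).Finite) : Finite (faceCurve A B).Point := by
  have := h.to_subtype
  let f : (faceCurve A B).Point → Option (facePoints A B)
    | .zero => none
    | .some x y h => some ⟨(x, y), equation_iff_mem_facePoints.mp h.1⟩
  refine Finite.of_injective f fun P Q hPQ => ?_
  cases P <;> cases Q <;> simp_all [f]

lemma yc_sq (P : (faceCurve A B).Point) :
    yc P ^ 2 = xc P * (xc P + A ^ 2) * (xc P + B ^ 2) := by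
  cases P with
  | zero => simp [xc, yc]
  | some x y h => exact equation_iff_mem_facePoints.mp h.1

lemma exists_point_of_mem_facePoints (hA : A ≠ 0) (hB : B ≠ 0) (hAB : A ^ 2 ≠ B ^ 2)
    (h2 : (2 : F) ≠ 0) {x y : F} (h : (x, y) ∈ facePoints A B) :
    ∃ P : (faceCurve A B).Point, xc P = x ∧ yc P = y := by
  have hΔ : (faceCurve A B).Δ ≠ 0 := by
    have e : (faceCurve A B).Δ = 2 ^ 4 * (A * B) ^ 4 * (A ^ 2 - B ^ 2) ^ 2 := by
      simp only [faceCurve, WeierstrassCurve.Δ, WeierstrassCurve.b₂, WeierstrassCurve.b₄,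
        WeierstrassCurve.b₆, WeierstrassCurve.b₈]
      ring
    have := sub_ne_zero.mpr hAB
    rw [e]
    positivity
  have hn : (faceCurve A B).Nonsingular x y :=
    ((faceCurve A B).equation_iff_nonsingular_of_Δ_ne_zero hΔ).mp
      (equation_iff_mem_facePoints.mpr h)
  exact ⟨.some x y hn, rfl, rfl⟩

lemma xc_neg (P : (faceCurve A B).Point) : xc (-P) = xc P := by
  cases P <;> rfl

lemma yc_neg (P : (faceCurve A B).Point) : yc (-P) = -yc P := by
  cases P with
  | zero => exact neg_zero.symm
  | some x y h =>
    rw [Affine.Point.neg_some]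
    simp [yc, faceCurve, Affine.negY]

lemma eq_or_eq_neg_of_xc_eq {P Q : (faceCurve A B).Point} (hP : P ≠ 0) (hQ : Q ≠ 0)
    (h : xc P = xc Q) : P = Q ∨ P = -Q := by
  cases P with
  | zero => exact absurd rfl hP
  | some x y h₁ =>
    cases Q with
    | zero => exact absurd rfl hQ
    | some x' y' h₂ => exact Affine.Point.X_eq_iff.mp h

section GroupLaw

variable [DecidableEq F]

lemma two_nsmul_eq_zero_of_yc_eq_zero {P : (faceCurve A B).Point} (h : yc P = 0) :
    2 • P = 0 := by
  rw [two_nsmul, ← eq_neg_iff_add_eq_zero]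
  cases P with
  | zero => rfl
  | some x y h₁ =>
    obtain rfl : y = 0 := h
    rw [Affine.Point.neg_some]
    simp [faceCurve, Affine.negY]

lemma xc_two_nsmul_mul {P : (faceCurve A B).Point} (h : 2 * yc P ≠ 0) :
    xc (2 • P) * (2 * yc P) ^ 2 = (xc P ^ 2 - A ^ 2 * B ^ 2) ^ 2 := by
  cases P with
  | zero => exact absurd (mul_zero 2) h
  | some x y h₁ =>
    have hne : y ≠ (faceCurve A B).negY x y := fun h₂ => h <| by
      simp only [faceCurve, Affine.negY] at h₂
      simp only [yc]
      linear_combination h₂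
    have hxy := equation_iff_mem_facePoints.mp h₁.1
    simp only [facePoints, Set.mem_ofPred_eq] at hxy
    have hneg : y - (faceCurve A B).negY x y = 2 * y := by
      simp only [faceCurve, Affine.negY]
      ring
    rw [two_nsmul, Affine.Point.add_self_of_Y_ne hne]
    simp only [xc, yc] at h ⊢
    rw [Affine.slope_of_Y_ne rfl hne, hneg]
    simp only [Affine.addX, faceCurve]
    have hslope := div_mul_cancel₀
      (3 * x ^ 2 + 2 * (A ^ 2 + B ^ 2) * x + A ^ 2 * B ^ 2 - 0 * y) h
    generalize (3 * x ^ 2 + 2 * (A ^ 2 + B ^ 2) * x + A ^ 2 * B ^ 2 - 0 * y) / (2 * y) = s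
      at hslope ⊢
    linear_combination (s * (2 * y) + 3 * x ^ 2 + 2 * (A ^ 2 + B ^ 2) * x + A ^ 2 * B ^ 2) * hslope
      - 4 * (A ^ 2 + B ^ 2 + 2 * x) * hxy

lemma xc_add_mul {P Q : (faceCurve A B).Point} (hP : P ≠ 0) (hQ : Q ≠ 0) (h : xc P ≠ xc Q) :
    xc (P + Q) * (xc P - xc Q) ^ 2 =
      (yc P - yc Q) ^ 2 - (A ^ 2 + B ^ 2 + xc P + xc Q) * (xc P - xc Q) ^ 2 := by
  cases P with
  | zero => exact absurd rfl hP
  | some x y h₁ =>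
    cases Q with
    | zero => exact absurd rfl hQ
    | some x' y' h₂ =>
      simp only [xc, yc] at h ⊢
      have := sub_ne_zero.mpr h
      rw [Affine.Point.add_of_X_ne h]
      simp only
      rw [Affine.slope_of_X_ne h]
      simp only [Affine.addX, faceCurve]
      field_simp
      ring

lemma xc_sub_mul {P Q : (faceCurve A B).Point} (hP : P ≠ 0) (hQ : Q ≠ 0) (h : xc P ≠ xc Q) :
    xc (P - Q) * (xc P - xc Q) ^ 2 =
      (yc P + yc Q) ^ 2 - (A ^ 2 + B ^ 2 + xc P + xc Q) * (xc P - xc Q) ^ 2 := by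
  have := xc_add_mul hP (neg_ne_zero.mpr hQ) (by rwa [xc_neg])
  rwa [← sub_eq_add_neg, xc_neg, yc_neg, sub_neg_eq_add] at this

lemma xc_add_sub_xc_sub_mul {P Q : (faceCurve A B).Point} (hP : P ≠ 0) (hQ : Q ≠ 0)
    (h : xc P ≠ xc Q) :
    (xc (P + Q) - xc (P - Q)) * (xc P - xc Q) ^ 2 = -(4 * yc P * yc Q) := by
  linear_combination xc_add_mul hP hQ h - xc_sub_mul hP hQ h

lemma xc_add_mul_xc_sub_mul {P Q : (faceCurve A B).Point} (hP : P ≠ 0) (hQ : Q ≠ 0)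
    (h : xc P ≠ xc Q) :
    xc (P + Q) * xc (P - Q) * (xc P - xc Q) ^ 2 = (xc P * xc Q - A ^ 2 * B ^ 2) ^ 2 := by
  refine mul_right_cancel₀ (pow_ne_zero 2 (sub_ne_zero.mpr h)) ?_
  calc
    _ = (xc (P + Q) * (xc P - xc Q) ^ 2) * (xc (P - Q) * (xc P - xc Q) ^ 2) := by ring
    _ = (yc P ^ 2 + yc Q ^ 2 - (A ^ 2 + B ^ 2 + xc P + xc Q) * (xc P - xc Q) ^ 2) ^ 2 -
        4 * yc P ^ 2 * yc Q ^ 2 := by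
      rw [xc_add_mul hP hQ h, xc_sub_mul hP hQ h]
      ring
    _ = _ := by
      rw [yc_sq, yc_sq]
      ring

lemma exists_xc_two_nsmul_eq_sq {P : (faceCurve A B).Point} (h : 2 * yc P ≠ 0) :
    ∃ T R S, xc (2 • P) = T ^ 2 ∧ R ^ 2 = T ^ 2 + A ^ 2 ∧ S ^ 2 = T ^ 2 + B ^ 2 := by
  have hx := xc_two_nsmul_mul h
  have hy := yc_sq P
  refine ⟨(xc P ^ 2 - A ^ 2 * B ^ 2) / (2 * yc P),
    (xc P ^ 2 + 2 * A ^ 2 * xc P + A ^ 2 * B ^ 2) / (2 * yc P),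
    (xc P ^ 2 + 2 * B ^ 2 * xc P + A ^ 2 * B ^ 2) / (2 * yc P), ?_, ?_, ?_⟩
  · rw [div_pow, eq_div_iff (pow_ne_zero 2 h), hx]
  · rw [div_pow, div_pow, div_add' _ _ _ (pow_ne_zero 2 h)]
    congr 1
    linear_combination -4 * A ^ 2 * hy
  · rw [div_pow, div_pow, div_add' _ _ _ (pow_ne_zero 2 h)]
    congr 1
    linear_combination -4 * B ^ 2 * hy

end GroupLaw

lemma exists_xc_two_nsmul_eq_sq_of_xc_eq_sq {K : Type*} [Field K] [LinearOrder K]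
    [IsStrictOrderedRing K] {A B : K} {P : (faceCurve A B).Point} {a b c : K} (hP : xc P = a ^ 2)
    (ha : 0 < a) (hb : 0 < b) (hc : 0 < c) (hab : b ^ 2 = a ^ 2 + A ^ 2)
    (hac : c ^ 2 = a ^ 2 + B ^ 2) :
    ∃ t r s, xc (2 • P) = t ^ 2 ∧ 0 < r ∧ 0 < s ∧ r ^ 2 = t ^ 2 + A ^ 2 ∧ s ^ 2 = t ^ 2 + B ^ 2 ∧
      (t + r) * (t + s) = a ^ 2 ∧ (t + r) * (r + s) = b ^ 2 ∧ (t + s) * (r + s) = c ^ 2 := by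
  obtain ⟨t, r, s, ht, h⟩ := exists_add_mul_add_eq_sq ha hb hc hab hac
  have hy : (2 * yc P) ^ 2 = (2 * a * b * c) ^ 2 := by
    rw [mul_pow, yc_sq, hP, ← hab, ← hac]
    ring
  have hy0 : 2 * yc P ≠ 0 := by
    rw [← pow_ne_zero_iff two_ne_zero, hy]
    positivity
  refine ⟨t, r, s, mul_right_cancel₀ (pow_ne_zero 2 hy0) ?_, h⟩
  rw [xc_two_nsmul_mul hy0, hP, hy, ← mul_pow t, ht]
  ring

lemma exists_xc_two_pow_nsmul_eq_sq {K : Type*} [Field K] [LinearOrder K] [IsStrictOrderedRing K]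
    {A B T : K} {P : (faceCurve A B).Point} (hAB : ¬ IsSquare |A * B|) (hP : xc P = T ^ 2)
    (hT : T ≠ 0) (k : ℕ) : ∃ U : K, U ≠ 0 ∧ xc (2 ^ k • P) = U ^ 2 := by
  induction k with
  | zero => exact ⟨T, hT, by rwa [pow_zero, one_nsmul]⟩
  | succ k ih =>
    obtain ⟨U, hU, hQ⟩ := ih
    rw [pow_succ, mul_nsmul]
    set Q := 2 ^ k • P
    have hy : 2 * yc Q ≠ 0 := by
      refine mul_ne_zero two_ne_zero ?_
      rw [← pow_ne_zero_iff two_ne_zero, yc_sq, hQ]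
      positivity
    obtain ⟨V, R, S, hV, -⟩ := exists_xc_two_nsmul_eq_sq hy
    refine ⟨V, ?_, hV⟩
    rintro rfl
    have hx := xc_two_nsmul_mul hy
    rw [hV, hQ, zero_pow two_ne_zero, zero_mul, eq_comm, pow_eq_zero_iff two_ne_zero, sub_eq_zero,
      ← mul_pow, sq_eq_sq_iff_abs_eq_abs _ _, abs_sq] at hx
    exact hAB ⟨U, by rw [← hx, sq]⟩

section Denominators

variable {A B : ℤ} {P Q V : (faceCurve (A : ℚ) B).Point} {w a b c : ℤ}

/-- The `x`-coordinate of `P` is the square of `a / w` in lowest terms, and `b / w`, `c / w` are the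
positive square roots of its translates by `A ^ 2` and `B ^ 2`. -/
structure Roots (P : (faceCurve (A : ℚ) B).Point) (w a b c : ℤ) : Prop where
  pos : 0 < w
  isCoprime : IsCoprime a w
  xc_eq : xc P = (a / w) ^ 2
  isRootTriple : IsRootTriple (A * w) (B * w) a b c

lemma exists_pos_eq_div {a w D : ℤ} {R : ℚ} (hw : 0 < w) (ha : a ≠ 0) (hR : 0 < R)
    (h : R ^ 2 = (a / w) ^ 2 + D ^ 2) :
    ∃ b : ℤ, 0 < b ∧ b ^ 2 = a ^ 2 + (D * w) ^ 2 ∧ R = b / w := by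
  have hw' : (0 : ℚ) < w := by exact_mod_cast hw
  have hsq : (R * w) ^ 2 = ((a ^ 2 + (D * w) ^ 2 : ℤ) : ℚ) := by
    push_cast
    rw [mul_pow, h]
    field_simp
  obtain ⟨b, hb, hb2⟩ := exists_pos_sq_eq_of_isSquare
    (Rat.isSquare_intCast_iff.mp ⟨R * w, by rw [← hsq, sq]⟩) (by positivity)
  refine ⟨b, hb, hb2, ?_⟩
  rw [eq_div_iff hw'.ne', ← pow_left_inj₀ (by positivity) (by positivity) two_ne_zero, hsq, ← hb2]
  push_cast
  rfl

lemma exists_roots (hAB : IsCoprime A B) {T R S : ℚ} (hP : xc P = T ^ 2) (hT : T ≠ 0)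
    (hR : 0 < R) (hS : 0 < S) (hTR : R ^ 2 = T ^ 2 + A ^ 2) (hTS : S ^ 2 = T ^ 2 + B ^ 2) :
    ∃ w a b c : ℤ, Roots P w a b c ∧ T = a / w ∧ R = b / w ∧ S = c / w := by
  have hT' : T = T.num / (T.den : ℤ) := T.num_div_den.symm
  have hw : (0 : ℤ) < T.den := by exact_mod_cast T.den_pos
  have hcop : IsCoprime T.num T.den := Int.isCoprime_iff_nat_coprime.mpr T.reduced
  rw [hT'] at hTR hTS
  obtain ⟨b, hb, hab, hRb⟩ := exists_pos_eq_div hw (Rat.num_ne_zero.mpr hT) hR hTR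
  obtain ⟨c, hc, hac, hSc⟩ := exists_pos_eq_div hw (Rat.num_ne_zero.mpr hT) hS hTS
  refine ⟨T.den, T.num, b, c, ⟨hw, hcop, hT' ▸ hP, Rat.num_ne_zero.mpr hT, hb, hc, hab, hac, ?_⟩,
    hT', hRb, hSc⟩
  intro p hp hpa hpb hpc
  have hpw : ¬ p ∣ T.den := fun hpw => hp.not_isUnit (hcop.isUnit_of_dvd' hpa hpw)
  have dvd_of_sq {D e : ℤ} (he : e ^ 2 = T.num ^ 2 + (D * T.den) ^ 2) (hpe : p ∣ e) : p ∣ D := by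
    have : p ∣ (D * T.den) ^ 2 :=
      (Int.dvd_add_right (dvd_pow hpa two_ne_zero)).mp (he ▸ dvd_pow hpe two_ne_zero)
    exact (hp.dvd_or_dvd (hp.dvd_of_dvd_pow this)).resolve_right hpw
  exact hp.not_isUnit (hAB.isUnit_of_dvd' (dvd_of_sq hab hpb) (dvd_of_sq hac hpc))

namespace Roots

lemma den_xc (h : Roots P w a b c) : ((xc P).den : ℤ) = w ^ 2 := by
  rw [h.xc_eq, Rat.den_pow]
  push_cast
  rw [Rat.den_div_eq_of_coprime h.pos (Int.isCoprime_iff_nat_coprime.mp h.isCoprime)]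

lemma xc_mul (h : Roots P w a b c) : xc P * w ^ 2 = a ^ 2 := by
  have : (w : ℚ) ≠ 0 := by exact_mod_cast h.pos.ne'
  rw [h.xc_eq, div_pow, div_mul_cancel₀ _ (pow_ne_zero 2 this)]

lemma abs_yc_mul (h : Roots P w a b c) : |yc P| * w ^ 3 = |(a : ℚ)| * b * c := by
  have hw : (0 : ℚ) < w := by exact_mod_cast h.pos
  have hb : (0 : ℚ) < b := by exact_mod_cast h.isRootTriple.pos₂
  have hc : (0 : ℚ) < c := by exact_mod_cast h.isRootTriple.pos₃
  have hab : (b : ℚ) ^ 2 = a ^ 2 + (A * w) ^ 2 := by exact_mod_cast h.isRootTriple.sq₂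
  have hac : (c : ℚ) ^ 2 = a ^ 2 + (B * w) ^ 2 := by exact_mod_cast h.isRootTriple.sq₃
  rw [← pow_left_inj₀ (by positivity) (by positivity) two_ne_zero, mul_pow, sq_abs, yc_sq, mul_pow,
    mul_pow, sq_abs, hab, hac, ← h.xc_mul]
  ring

lemma exists_two_nsmul (hAB : IsCoprime A B) (h : Roots P w a b c) (hP : xc (2 • P) ≠ 0) :
    ∃ w' t r s, Roots (2 • P) w' t r s ∧
      IsDouble (a * w') (b * w') (c * w') (t * w) (r * w) (s * w) := by
  have hw : (0 : ℚ) < w := by exact_mod_cast h.pos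
  have ha : (0 : ℚ) < |(a : ℚ)| := abs_pos.mpr (by exact_mod_cast h.isRootTriple.ne_zero)
  have hb : (0 : ℚ) < b := by exact_mod_cast h.isRootTriple.pos₂
  have hc : (0 : ℚ) < c := by exact_mod_cast h.isRootTriple.pos₃
  have hab : (b : ℚ) ^ 2 = a ^ 2 + (A * w) ^ 2 := by exact_mod_cast h.isRootTriple.sq₂
  have hac : (c : ℚ) ^ 2 = a ^ 2 + (B * w) ^ 2 := by exact_mod_cast h.isRootTriple.sq₃
  obtain ⟨t, r, s, hxc, hr, hs, htr, hts, h₁, h₂, h₃⟩ :=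
    exists_xc_two_nsmul_eq_sq_of_xc_eq_sq (a := |(a : ℚ)| / w) (b := b / w) (c := c / w)
      (by rw [h.xc_eq, div_pow, div_pow, sq_abs]) (by positivity) (by positivity) (by positivity)
      (by rw [div_pow, div_pow, sq_abs, hab]; field_simp)
      (by rw [div_pow, div_pow, sq_abs, hac]; field_simp)
  have ht : t ≠ 0 := fun ht => hP (by rw [hxc, ht, zero_pow two_ne_zero])
  obtain ⟨w', t, r, s, hroots, rfl, rfl, rfl⟩ := exists_roots hAB hxc ht hr hs htr hts
  have hw' : (0 : ℚ) < w' := by exact_mod_cast hroots.pos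
  rw [div_pow, sq_abs] at h₁
  field_simp at h₁ h₂ h₃
  have e₁ : (t + r) * (t + s) * w ^ 2 = w' ^ 2 * a ^ 2 := by exact_mod_cast h₁
  have e₂ : (t + r) * w ^ 2 * (r + s) = w' ^ 2 * b ^ 2 := by exact_mod_cast h₂
  have e₃ : (t + s) * w ^ 2 * (r + s) = w' ^ 2 * c ^ 2 := by exact_mod_cast h₃
  exact ⟨w', t, r, s, hroots, by linear_combination e₁, by linear_combination e₂,
    by linear_combination e₃⟩

end Roots

/-! ### Points of odd order -/

lemma yc_ne_zero_of_isOddTorsion (hP : IsOddTorsion P) : yc P ≠ 0 := fun h =>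
  hP.two_nsmul_ne_zero (two_nsmul_eq_zero_of_yc_eq_zero h)

lemma xc_ne_zero_of_isOddTorsion (hP : IsOddTorsion P) : xc P ≠ 0 := fun h =>
  yc_ne_zero_of_isOddTorsion hP <| by
    rw [← sq_eq_zero_iff, yc_sq, h, zero_mul, zero_mul]

lemma exists_roots_of_isOddTorsion (hAB : IsCoprime A B) (hP : IsOddTorsion P) :
    ∃ w a b c : ℤ, Roots P w a b c := by
  obtain ⟨Q, hQ, rfl⟩ := hP.exists_two_nsmul_eq
  obtain ⟨T, R, S, hT, hR, hS⟩ :=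
    exists_xc_two_nsmul_eq_sq (mul_ne_zero two_ne_zero (yc_ne_zero_of_isOddTorsion hQ))
  have hT0 : T ≠ 0 := by
    rintro rfl
    exact xc_ne_zero_of_isOddTorsion hP (hT.trans (zero_pow two_ne_zero))
  have ne_zero_of_sq {X D : ℚ} (h : X ^ 2 = T ^ 2 + D ^ 2) : X ≠ 0 := by
    rw [← pow_ne_zero_iff two_ne_zero, h]
    positivity
  obtain ⟨w, a, b, c, h, -⟩ := exists_roots hAB hT hT0 (abs_pos.mpr (ne_zero_of_sq hR))
    (abs_pos.mpr (ne_zero_of_sq hS)) ((sq_abs R).trans hR) ((sq_abs S).trans hS)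
  exact ⟨w, a, b, c, h⟩

lemma abs_xc_sub_mul (h2 : 2 • V ≠ 0) (h4 : 2 • (2 • V) ≠ 0) (h : xc (2 • (2 • V)) ≠ xc (2 • V)) :
    |xc (2 • (3 • V)) - xc (2 • V)| * (xc (2 • (2 • V)) - xc (2 • V)) ^ 2 =
      4 * |yc (2 • (2 • V))| * |yc (2 • V)| := by
  have hadd : 2 • (2 • V) + 2 • V = (2 • (3 • V) : (faceCurve (A : ℚ) B).Point) := by abel
  have hsub : 2 • (2 • V) - 2 • V = (2 • V : (faceCurve (A : ℚ) B).Point) := by abel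
  have := congrArg abs (xc_add_sub_xc_sub_mul h4 h2 h)
  rwa [hadd, hsub, abs_mul, abs_neg, abs_mul, abs_mul, abs_sq, Nat.abs_ofNat] at this

/-- A point of odd order whose `x`-coordinate has the largest denominator among all points of odd
order. Doubling and tripling then preserve the denominator exactly. -/
structure IsMaximal (P : (faceCurve (A : ℚ) B).Point) : Prop where
  isOddTorsion : IsOddTorsion P
  den_le : ∀ Q : (faceCurve (A : ℚ) B).Point, IsOddTorsion Q → (xc Q).den ≤ (xc P).den

lemma exists_isMaximal [Finite (faceCurve (A : ℚ) B).Point] (hP : IsOddTorsion P) :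
    ∃ V : (faceCurve (A : ℚ) B).Point, IsMaximal V := by
  obtain ⟨V, hV, hmax⟩ :=
    Set.exists_max_image {Q | IsOddTorsion Q} (fun Q => (xc Q).den) (Set.toFinite _) ⟨P, hP⟩
  exact ⟨V, hV, hmax⟩

namespace IsMaximal

lemma eq_of_dvd (hP : IsMaximal P) (h : Roots P w a b c) (hQ : IsOddTorsion Q) {w' a' b' c' : ℤ}
    (h' : Roots Q w' a' b' c') (hww' : w ∣ w') : w' = w := by
  have hle : w' ^ 2 ≤ w ^ 2 := by
    rw [← h.den_xc, ← h'.den_xc]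
    exact_mod_cast hP.den_le Q hQ
  exact le_antisymm (le_of_sq_le_sq hle h.pos.le) (Int.le_of_dvd h'.pos hww')

lemma of_roots (hP : IsMaximal P) (h : Roots P w a b c) (hQ : IsOddTorsion Q) {a' b' c' : ℤ}
    (h' : Roots Q w a' b' c') : IsMaximal Q where
  isOddTorsion := hQ
  den_le R hR := by
    have : (xc Q).den = (xc P).den := by
      exact_mod_cast h'.den_xc.trans h.den_xc.symm
    exact this ▸ hP.den_le R hR

lemma exists_roots_two_nsmul (hAB : IsCoprime A B) (hP : IsMaximal P) (h : Roots P w a b c) :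
    ∃ t r s, Roots (2 • P) w t r s ∧ IsDouble a b c t r s := by
  have h2 := hP.isOddTorsion.two_nsmul
  obtain ⟨w', t, r, s, h', hd⟩ := h.exists_two_nsmul hAB (xc_ne_zero_of_isOddTorsion h2)
  have hdvd : w ^ 2 ∣ (a * w') ^ 2 := ⟨(t + r) * (t + s), by rw [← hd.sq₁]; ring⟩
  obtain rfl := hP.eq_of_dvd h h2 h' <|
    h.isCoprime.symm.dvd_of_dvd_mul_left ((Int.pow_dvd_pow_iff two_ne_zero).mp hdvd)
  have hw : w' ^ 2 ≠ 0 := pow_ne_zero 2 h.pos.ne'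
  exact ⟨t, r, s, h', mul_right_cancel₀ hw (by linear_combination hd.sq₁),
    mul_right_cancel₀ hw (by linear_combination hd.sq₂),
    mul_right_cancel₀ hw (by linear_combination hd.sq₃)⟩

lemma two_nsmul (hAB : IsCoprime A B) (hP : IsMaximal P) : IsMaximal (2 • P) := by
  obtain ⟨w, a, b, c, h⟩ := exists_roots_of_isOddTorsion hAB hP.isOddTorsion
  obtain ⟨t, r, s, h', -⟩ := hP.exists_roots_two_nsmul hAB h
  exact hP.of_roots h hP.isOddTorsion.two_nsmul h'

lemma xc_two_nsmul_ne (hP : IsMaximal P) (h3 : 3 • P ≠ 0) : xc (2 • P) ≠ xc P := fun h => by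
  rcases eq_or_eq_neg_of_xc_eq hP.isOddTorsion.two_nsmul.1 hP.isOddTorsion.1 h with h | h
  · exact hP.isOddTorsion.1 (by rwa [_root_.two_nsmul, add_eq_left] at h)
  · exact h3 (by rw [succ_nsmul, h, neg_add_cancel])

lemma exists_roots_three_nsmul (hAB : IsCoprime A B) (hP : IsMaximal P) (h3 : 3 • P ≠ 0)
    (h : Roots P w a b c) : ∃ a₃ b₃ c₃, Roots (3 • P) w a₃ b₃ c₃ := by
  have hodd := hP.isOddTorsion.nsmul h3
  obtain ⟨t, r, s, h₂, -⟩ := hP.exists_roots_two_nsmul hAB h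
  obtain ⟨w₃, a₃, b₃, c₃, h₃⟩ := exists_roots_of_isOddTorsion hAB hodd
  have hmul : a₃ ^ 2 * a ^ 2 * (t ^ 2 - a ^ 2) ^ 2 * w ^ 2 =
      (t ^ 2 * a ^ 2 - A ^ 2 * B ^ 2 * w ^ 4) ^ 2 * w₃ ^ 2 := by
    have e := xc_add_mul_xc_sub_mul hP.isOddTorsion.two_nsmul.1 hP.isOddTorsion.1
      (hP.xc_two_nsmul_ne h3)
    rw [← succ_nsmul, succ_nsmul P 1, one_nsmul, add_sub_cancel_right] at e
    have hw : (w : ℚ) ≠ 0 := by exact_mod_cast h.pos.ne'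
    have hw₃ : (w₃ : ℚ) ≠ 0 := by exact_mod_cast h₃.pos.ne'
    rw [← _root_.two_nsmul, h₃.xc_eq, h₂.xc_eq, h.xc_eq] at e
    field_simp at e
    have e' : a₃ ^ 2 * a ^ 2 * w ^ 2 * (t ^ 2 - a ^ 2) ^ 2 =
        w₃ ^ 2 * (a ^ 2 * t ^ 2 - w ^ 4 * A ^ 2 * B ^ 2) ^ 2 := by exact_mod_cast e
    linear_combination e'
  have hdvd : w ^ 2 ∣ ((t ^ 2 * a ^ 2 - A ^ 2 * B ^ 2 * w ^ 4) * w₃) ^ 2 := by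
    rw [mul_pow, ← hmul]
    exact dvd_mul_left _ _
  have hcop : IsCoprime w (t ^ 2 * a ^ 2 - A ^ 2 * B ^ 2 * w ^ 4) := by
    rw [show t ^ 2 * a ^ 2 - A ^ 2 * B ^ 2 * w ^ 4 =
      t ^ 2 * a ^ 2 + w * -(A ^ 2 * B ^ 2 * w ^ 3) by ring]
    exact (h₂.isCoprime.pow_left.mul_left h.isCoprime.pow_left).symm.add_mul_left_right _
  obtain rfl := hP.eq_of_dvd h hodd h₃ <|
    hcop.dvd_of_dvd_mul_left ((Int.pow_dvd_pow_iff two_ne_zero).mp hdvd)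
  exact ⟨a₃, b₃, c₃, h₃⟩

lemma exists_xc_two_nsmul_mul_eq (hAB : IsCoprime A B) (hB : Even B) (hV : IsMaximal V)
    (h : Roots V w a b c) : ∃ m k : ℤ, 0 < m ∧ 0 < k ∧ xc (2 • V) * w ^ 2 = (4 * m ^ 4 : ℚ) ∧
      |yc (2 • V)| * w ^ 3 = (k ^ 2 : ℚ) := by
  obtain ⟨a₂, b₂, c₂, h₂, hd⟩ := hV.exists_roots_two_nsmul hAB h
  obtain ⟨a₄, b₄, c₄, h₄, hd'⟩ := (hV.two_nsmul hAB).exists_roots_two_nsmul hAB h₂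
  obtain ⟨μ, ν, l, hμ, hν, hl, ha₂, hb₂, hc₂, -⟩ :=
    hd.exists_eq_mul_sq (hB.mul_right w) h.isRootTriple h₂.isRootTriple hd'
      (add_pos h₄.isRootTriple.pos₂ h₄.isRootTriple.pos₃)
  refine ⟨μ * ν, 2 * μ ^ 2 * ν ^ 2 * l, by positivity, by positivity, ?_, ?_⟩
  · rw [h₂.xc_mul, ← sq_abs, ← Int.cast_abs, ha₂]
    push_cast
    ring
  · rw [h₂.abs_yc_mul, ← Int.cast_abs, ha₂, hb₂, hc₂]
    push_cast
    ring

-- If `3 • V = 0`, then `4 • V = -(2 • V)` and the roots of `2 • V` are a fixed point of doubling.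
lemma three_nsmul_ne_zero (hAB : IsCoprime A B) (hB : Even B) (hV : IsMaximal V) :
    3 • V ≠ 0 := fun h3 => by
  obtain ⟨w, a, b, c, h⟩ := exists_roots_of_isOddTorsion hAB hV.isOddTorsion
  obtain ⟨a₂, b₂, c₂, h₂, hd⟩ := hV.exists_roots_two_nsmul hAB h
  obtain ⟨a₄, b₄, c₄, h₄, hd'⟩ := (hV.two_nsmul hAB).exists_roots_two_nsmul hAB h₂
  have hneg : 2 • (2 • V) = (-(2 • V) : (faceCurve (A : ℚ) B).Point) := by
    rw [eq_neg_iff_add_eq_zero, ← succ_nsmul, smul_comm, h3, nsmul_zero]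
  have hsq : a₄ ^ 2 = a₂ ^ 2 := by
    have : (a₄ : ℚ) ^ 2 = a₂ ^ 2 := by rw [← h₄.xc_mul, ← h₂.xc_mul, hneg, xc_neg]
    exact_mod_cast this
  have hb : b₄ = b₂ := by
    rw [← pow_left_inj₀ h₄.isRootTriple.pos₂.le h₂.isRootTriple.pos₂.le two_ne_zero,
      h₄.isRootTriple.sq₂, h₂.isRootTriple.sq₂, hsq]
  have hc : c₄ = c₂ := by
    rw [← pow_left_inj₀ h₄.isRootTriple.pos₃.le h₂.isRootTriple.pos₃.le two_ne_zero,
      h₄.isRootTriple.sq₃, h₂.isRootTriple.sq₃, hsq]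
  subst hb hc
  exact hd.not_isDouble_self (hB.mul_right w) h.isRootTriple h₂.isRootTriple hd'

lemma exists_isSquare_abs_pow_four_sub_pow_four (hAB : IsCoprime A B) (hB : Even B)
    (hV : IsMaximal V) :
    ∃ x y : ℤ, x ≠ 0 ∧ y ≠ 0 ∧ x ^ 4 ≠ y ^ 4 ∧ IsSquare |x ^ 4 - y ^ 4| := by
  have h3 := hV.three_nsmul_ne_zero hAB hB
  have hV₂ := hV.two_nsmul hAB
  obtain ⟨w, a, b, c, h⟩ := exists_roots_of_isOddTorsion hAB hV.isOddTorsion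
  obtain ⟨a₂, b₂, c₂, h₂, -⟩ := hV.exists_roots_two_nsmul hAB h
  obtain ⟨a₃, b₃, c₃, h₃⟩ := hV.exists_roots_three_nsmul hAB h3 h
  have hV₃ : IsMaximal (3 • V) := hV.of_roots h (hV.isOddTorsion.nsmul h3) h₃
  obtain ⟨m, k, hm, hk, hx, hy⟩ := hV.exists_xc_two_nsmul_mul_eq hAB hB h
  obtain ⟨m₂, k₂, -, hk₂, -, hy₂⟩ := hV₂.exists_xc_two_nsmul_mul_eq hAB hB h₂
  obtain ⟨m₃, k₃, hm₃, -, hx₃, -⟩ := hV₃.exists_xc_two_nsmul_mul_eq hAB hB h₃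
  have hne := hV₂.xc_two_nsmul_ne (hV₂.three_nsmul_ne_zero hAB hB)
  have hw : (0 : ℚ) < w := by exact_mod_cast h.pos
  have hdiff : ((|m₃ ^ 4 - m ^ 4| : ℤ) : ℚ) =
      (k₂ * k / (w ^ 2 * (xc (2 • (2 • V)) - xc (2 • V)))) ^ 2 := by
    have hx_sub : 4 * |(m₃ : ℚ) ^ 4 - m ^ 4| = |xc (2 • (3 • V)) - xc (2 • V)| * w ^ 2 := by
      rw [← abs_of_pos (pow_pos hw 2), ← abs_mul, sub_mul, hx₃, hx, ← mul_sub, abs_mul,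
        Nat.abs_ofNat]
    rw [div_pow, mul_pow (k₂ : ℚ), ← hy₂, ← hy,
      eq_div_iff (pow_ne_zero 2 (mul_ne_zero (pow_ne_zero 2 hw.ne') (sub_ne_zero.mpr hne)))]
    push_cast
    linear_combination (w ^ 4 * (xc (2 • (2 • V)) - xc (2 • V)) ^ 2 / 4) * hx_sub +
      w ^ 6 / 4 * abs_xc_sub_mul hV₂.isOddTorsion.1 hV₂.isOddTorsion.two_nsmul.1 hne
  refine ⟨m₃, m, hm₃.ne', hm.ne', fun h0 => ?_, Rat.isSquare_intCast_iff.mp ⟨_, hdiff.trans (sq _)⟩⟩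
  have : (0 : ℚ) < k₂ * k := by exact_mod_cast mul_pos hk₂ hk
  rw [h0, sub_self, abs_zero, Int.cast_zero] at hdiff
  exact absurd hdiff.symm (by positivity)

end IsMaximal

theorem not_isOddTorsion [Finite (faceCurve (A : ℚ) B).Point] (hAB : IsCoprime A B) (hB : Even B)
    (P : (faceCurve (A : ℚ) B).Point) : ¬ IsOddTorsion P := fun hP => by
  obtain ⟨V, hV⟩ := exists_isMaximal hP
  obtain ⟨x, y, hx, hy, hxy, h⟩ := hV.exists_isSquare_abs_pow_four_sub_pow_four hAB hB
  exact not_isSquare_abs_pow_four_sub_pow_four hx hy hxy h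

end Denominators

end faceCurve

/-! ### Bricks -/

lemma not_isSquare_abs_mul {A B : ℤ} (hA : A ≠ 0) (hB : B ≠ 0) (hAB : IsCoprime A B)
    (h : IsSquare (A ^ 2 + B ^ 2)) : ¬ IsSquare |A * B| := fun hsq => by
  rw [abs_mul] at hsq
  obtain ⟨u, hu, hAu⟩ :=
    exists_pos_eq_sq_of_isCoprime_of_isSquare_mul hAB.abs_abs (abs_pos.mpr hA) hsq
  obtain ⟨v, hv, hBv⟩ :=
    exists_pos_eq_sq_of_isCoprime_of_isSquare_mul hAB.abs_abs.symm (abs_pos.mpr hB)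
      (mul_comm |A| |B| ▸ hsq)
  obtain ⟨z, hz⟩ := h
  refine not_fermat_42 hu.ne' hv.ne' (c := z) ?_
  rw [← sq_abs A, ← sq_abs B, hAu, hBv] at hz
  linear_combination hz

lemma facePoints_infinite_of_even {A B : ℤ} (hA : A ≠ 0) (hB : B ≠ 0) (hAB : IsCoprime A B)
    (heven : Even B) (h : IsSquare (A ^ 2 + B ^ 2)) {T : ℚ} (hT : T ≠ 0)
    (hTA : IsSquare (T ^ 2 + A ^ 2)) (hTB : IsSquare (T ^ 2 + B ^ 2)) :
    (facePoints (A : ℚ) B).Infinite := fun hfin => by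
  have := faceCurve.finite_point hfin
  have hsq := not_isSquare_abs_mul hA hB hAB h
  have hne : (A : ℚ) ^ 2 ≠ B ^ 2 := fun h0 => hsq <| by
    rw [abs_mul, (sq_eq_sq_iff_abs_eq_abs A B).mp (by exact_mod_cast h0)]
    exact ⟨|B|, rfl⟩
  obtain ⟨R, hR⟩ := hTA
  obtain ⟨S, hS⟩ := hTB
  have hmem : (T ^ 2, T * R * S) ∈ facePoints (A : ℚ) B := by
    simp only [facePoints, Set.mem_ofPred_eq, hR, hS]
    ring
  obtain ⟨P, hP, -⟩ := faceCurve.exists_point_of_mem_facePoints (Int.cast_ne_zero.mpr hA)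
    (Int.cast_ne_zero.mpr hB) hne two_ne_zero hmem
  obtain ⟨Q, hQ⟩ := exists_isOddTorsion_of_two_pow_nsmul_ne_zero (P := P) fun k hk => by
    obtain ⟨U, hU, hxU⟩ := faceCurve.exists_xc_two_pow_nsmul_eq_sq
      (by rw [← Rat.isSquare_intCast_iff] at hsq; exact_mod_cast hsq) hP hT k
    rw [hk] at hxU
    exact pow_ne_zero 2 hU hxU.symm
  exact faceCurve.not_isOddTorsion hAB heven Q hQ

lemma facePoints_comm {F : Type*} [Field F] (A B : F) : facePoints A B = facePoints B A := by
  ext P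
  simp only [facePoints, Set.mem_ofPred_eq, mul_right_comm P.1]

lemma facePoints_infinite_of_isCoprime {A B : ℤ} (hA : A ≠ 0) (hB : B ≠ 0) (hAB : IsCoprime A B)
    (h : IsSquare (A ^ 2 + B ^ 2)) {T : ℚ} (hT : T ≠ 0)
    (hTA : IsSquare (T ^ 2 + A ^ 2)) (hTB : IsSquare (T ^ 2 + B ^ 2)) :
    (facePoints (A : ℚ) B).Infinite := by
  obtain ⟨z, hz⟩ := h
  have hpyth : PythagoreanTriple A B z := by
    rw [PythagoreanTriple]
    linear_combination hz
  rcases hpyth.even_odd_of_coprime (Int.isCoprime_iff_gcd_eq_one.mp hAB) with ⟨hA2, -⟩ | ⟨-, hB2⟩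
  · rw [facePoints_comm]
    exact facePoints_infinite_of_even hB hA hAB.symm (Int.even_iff.mpr hA2)
      ⟨z, by rw [add_comm, hz]⟩ hT hTB hTA
  · exact facePoints_infinite_of_even hA hB hAB (Int.even_iff.mpr hB2) ⟨z, hz⟩ hT hTA hTB

lemma facePoints_infinite_mul {F : Type*} [Field F] {A B l : F} (hl : l ≠ 0)
    (h : (facePoints A B).Infinite) : (facePoints (l * A) (l * B)).Infinite := by
  refine Set.infinite_of_injOn_mapsTo (f := fun P => (l ^ 2 * P.1, l ^ 3 * P.2)) ?_ ?_ h
  · intro P _ Q _ hPQ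
    obtain ⟨h₁, h₂⟩ := Prod.mk.inj hPQ
    exact Prod.ext (mul_left_cancel₀ (pow_ne_zero 2 hl) h₁) (mul_left_cancel₀ (pow_ne_zero 3 hl) h₂)
  · intro P hP
    simp only [facePoints, Set.mem_ofPred_eq] at hP ⊢
    linear_combination l ^ 6 * hP

lemma isSquare_div_sq_add {c g A : ℚ} (hg : g ≠ 0) (h : IsSquare ((A * g) ^ 2 + c ^ 2)) :
    IsSquare ((c / g) ^ 2 + A ^ 2) := by
  have e : (c / g) ^ 2 + A ^ 2 = ((A * g) ^ 2 + c ^ 2) / g ^ 2 := by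
    field_simp
    ring
  rw [e]
  exact h.div (IsSquare.sq g)

theorem facePoints_infinite_of_isSquare {a b c : ℤ} (ha : a ≠ 0) (hb : b ≠ 0) (hc : c ≠ 0)
    (hab : IsSquare (a ^ 2 + b ^ 2)) (hac : IsSquare (a ^ 2 + c ^ 2))
    (hbc : IsSquare (b ^ 2 + c ^ 2)) : (facePoints (a : ℚ) b).Infinite := by
  obtain ⟨g, A, B, hg, hAB, rfl, rfl⟩ :=
    Int.exists_gcd_one' (Int.gcd_pos_of_ne_zero_left b ha)
  have hg' : (g : ℚ) ≠ 0 := by exact_mod_cast hg.ne'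
  have hABsq : IsSquare (A ^ 2 + B ^ 2) :=
    isSquare_of_isSquare_sq_mul (x := g) (by exact_mod_cast hg.ne') (by convert hab using 1; ring)
  have hinf := facePoints_infinite_of_isCoprime (left_ne_zero_of_mul ha) (left_ne_zero_of_mul hb)
    (Int.isCoprime_iff_gcd_eq_one.mpr hAB) hABsq (T := c / g)
    (div_ne_zero (Int.cast_ne_zero.mpr hc) hg')
    (isSquare_div_sq_add hg' (by exact_mod_cast Rat.isSquare_intCast_iff.mpr hac))
    (isSquare_div_sq_add hg' (by exact_mod_cast Rat.isSquare_intCast_iff.mpr hbc))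
  push_cast
  rw [mul_comm (A : ℚ), mul_comm (B : ℚ)]
  exact facePoints_infinite_mul hg' hinf

lemma EF1_eq_facePoints (p q : ℤ) :
    EF1 p q = facePoints ((p ^ 2 - q ^ 2 : ℤ) : ℚ) (2 * p * q : ℤ) := by
  ext P
  simp only [EF1, facePoints, Set.mem_ofPred_eq]
  push_cast
  ring_nf

theorem no_euler_brick_with_face_ratio_general (A B : ℚ) (hA : A ≠ 0)
    (h : (facePoints A B).Finite) :
    ¬ ∃ a b c : ℤ, 0 < a ∧ 0 < b ∧ 0 < c ∧
      IsSquare (a ^ 2 + b ^ 2) ∧ IsSquare (a ^ 2 + c ^ 2) ∧ IsSquare (b ^ 2 + c ^ 2) ∧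
      a * B = b * A := by
  rintro ⟨a, b, c, ha, hb, hc, hab, hac, hbc, hratio⟩
  have ha' : (a : ℚ) ≠ 0 := Int.cast_ne_zero.mpr ha.ne'
  have hinf := facePoints_infinite_mul (div_ne_zero hA ha')
    (facePoints_infinite_of_isSquare ha.ne' hb.ne' hc.ne' hab hac hbc)
  rw [div_mul_cancel₀ A ha', div_mul_eq_mul_div, mul_comm A, ← hratio,
    mul_div_cancel_left₀ B ha'] at hinf
  exact hinf h

/-- If EF1 has only finitely many rational points, then no Euler brick has a face with
aspect ratio `(p²−q²) : 2pq`. -/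
theorem no_euler_brick_with_face_ratio
    (p q : ℤ) (hq : 0 < q) (hqp : q < p) (hcop : IsCoprime p q) (hpar : p % 2 ≠ q % 2)
    (h : (EF1 p q).Finite) :
    ¬ ∃ a b c : ℤ, 0 < a ∧ 0 < b ∧ 0 < c ∧
      IsSquare (a ^ 2 + b ^ 2) ∧ IsSquare (a ^ 2 + c ^ 2) ∧ IsSquare (b ^ 2 + c ^ 2) ∧
      a * (2 * p * q) = b * (p ^ 2 - q ^ 2) := by
  have hne : p ^ 2 - q ^ 2 ≠ 0 := (sub_pos.mpr (by gcongr)).ne'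
  exact_mod_cast no_euler_brick_with_face_ratio_general _ _ (Int.cast_ne_zero.mpr hne)
    (EF1_eq_facePoints p q ▸ h)
end

section
/- Theorem 2: For any admissible pair (p,q) satisfying either p⁴−q⁴ > 4p³q or p⁴−q⁴ < 4pq³, there exists an edge cuboid whose integer edges are in the ratio (p²−q²):2pq; that is, there exist positive integers a, b and a positive integer E that is not a perfect square such that a·2pq = b·(p²−q²) and a²+b², a²+E, b²+E, and a²+b²+E are all perfect squares. -/
/-!
Put `Q(x, y, z) = (y² + z² - x²)² - (2yz)²`. It is symmetric in `x, y, z`, so all three of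
`(2yz)² + Q`, `(2xz)² + Q`, `(2xy)² + Q` are squares. Hence `a = 2yz`, `b = 2xz`, `E = Q(x, y, z)`
give an edge cuboid as soon as `a² + b² = (2xy)²`, `Q > 0` and `Q` is not a square. A right
triangle `u² + v² = w²` supplies a triple satisfying the first condition, namely `x = vw`, `y = uw`,
`z = uv`, and then `a : b = u : v`.

*Positivity.* By Heron's formula, `Q` is positive when one of `x, y, z` exceeds the sum of the other
two; the range hypotheses say that this happens for `y` or for `x`.

*Not a square.* With `A = x² + y² - z²` and `B = 2xy` one has `Q = A² - B²`, while
`A² + B² = (x² + y² + z²)²`. But `A² + B²` and `A² - B²` with `B ≠ 0` are never both squares: for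
coprime `A, B`, the classification of Pythagorean triples gives `B² = 4mn(m + n)(m - n)` with
`m`, `n`, `m + n`, `m - n` pairwise coprime, so all four are squares, and `(√m, √n)` is a smaller
pair of the same kind.
-/

section Fermat

lemma isSquare_of_isSquare_sq_mul_s4 {g n : ℤ} (hg : g ≠ 0) (h : IsSquare (g ^ 2 * n)) :
    IsSquare n := by
  obtain ⟨z, hz⟩ := h
  obtain ⟨t, rfl⟩ : g ∣ z := by
    rw [← Int.pow_dvd_pow_iff two_ne_zero, sq z, ← hz]
    exact dvd_mul_right ..
  exact ⟨t, mul_left_cancel₀ (pow_ne_zero 2 hg) (by linear_combination hz)⟩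

lemma isSquare_of_isCoprime_of_isSquare_mul {m n : ℤ} (hm : 0 ≤ m) (hmn : IsCoprime m n)
    (h : IsSquare (m * n)) : IsSquare m := by
  obtain ⟨c, hc⟩ := h
  obtain ⟨k, rfl | rfl⟩ := Int.sq_of_isCoprime hmn (hc.trans (sq c).symm)
  · exact .sq k
  · simp [show k = 0 by nlinarith]

lemma isCoprime_add_sub {R : Type*} [CommRing R] {m n : R} (hmn : IsCoprime m n)
    (htwo : IsCoprime (m + n) 2) : IsCoprime (m + n) (m - n) := by
  have hm : IsCoprime (m + n) m := by
    simpa only [mul_one, add_comm] using hmn.symm.add_mul_left_left 1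
  have hsub : m - n = 2 * m + (m + n) * -1 := by ring
  rw [hsub]
  exact (htwo.mul_right hm).add_mul_left_right (-1)

lemma isCoprime_mul_add_mul_sub {R : Type*} [CommRing R] {m n : R} (hmn : IsCoprime m n) :
    IsCoprime (m * n) ((m + n) * (m - n)) := by
  rw [← mul_self_sub_mul_self]
  exact .mul_left (IsCoprime.mul_sub_left_right_iff.2 (hmn.mul_right hmn))
    (IsCoprime.sub_mul_left_right_iff.2 (hmn.symm.mul_right hmn.symm))

lemma isSquare_of_isSquare_mul_mul_add_mul_sub {m n : ℤ} (hn : 0 < n) (hnm : n < m)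
    (hmn : IsCoprime m n) (hodd : Odd (m + n)) (h : IsSquare (m * n * ((m + n) * (m - n)))) :
    IsSquare m ∧ IsSquare n ∧ IsSquare (m + n) ∧ IsSquare (m - n) := by
  have hm : 0 < m := hn.trans hnm
  have hadd : 0 < m + n := by positivity
  have hsub : 0 < m - n := sub_pos.2 hnm
  have hpm := isCoprime_add_sub hmn (Int.isCoprime_two_right.2 hodd)
  have hcop := isCoprime_mul_add_mul_sub hmn
  have hprod : IsSquare (m * n) :=
    isSquare_of_isCoprime_of_isSquare_mul (by positivity) hcop h
  have hprod' : IsSquare ((m + n) * (m - n)) :=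
    isSquare_of_isCoprime_of_isSquare_mul (by positivity) hcop.symm (by rwa [mul_comm])
  exact ⟨isSquare_of_isCoprime_of_isSquare_mul hm.le hmn hprod,
    isSquare_of_isCoprime_of_isSquare_mul hn.le hmn.symm (by rwa [mul_comm]),
    isSquare_of_isCoprime_of_isSquare_mul hadd.le hpm hprod',
    isSquare_of_isCoprime_of_isSquare_mul hsub.le hpm.symm (by rwa [mul_comm])⟩

lemma exists_sq_add_sq_eq_and_two_mul_mul_eq {x y : ℤ} (hy : y ≠ 0)
    (hadd : IsSquare (x ^ 2 + y ^ 2)) (hsub : IsSquare (x ^ 2 - y ^ 2)) :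
    ∃ c d : ℤ, 0 < c ∧ 0 < d ∧ c ^ 2 + d ^ 2 = x ^ 2 ∧ 2 * c * d = y ^ 2 := by
  obtain ⟨a, ha⟩ := hadd
  obtain ⟨b, hb⟩ := hsub
  rw [← abs_mul_abs_self] at ha hb
  have hlt : |b| < |a| := by nlinarith [sq_pos_of_ne_zero hy, abs_nonneg a, abs_nonneg b]
  have hpar : Even (|a| - |b|) := by
    have hdiff : Even (|a| * |a| - |b| * |b|) := ⟨y ^ 2, by linear_combination hb - ha⟩
    simpa only [Int.even_sub, Int.even_mul, or_self] using hdiff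
  obtain ⟨d, hd⟩ := hpar
  have hb0 := abs_nonneg b
  rw [sub_eq_iff_eq_add.1 hd] at ha
  exact ⟨|b| + d, d, by linarith, by linarith, by linarith, by linarith⟩

lemma exists_eq_four_mul_mul_sq_sub_sq {x y : ℤ} (hy : y ≠ 0) (hxy : IsCoprime x y)
    (hadd : IsSquare (x ^ 2 + y ^ 2)) (hsub : IsSquare (x ^ 2 - y ^ 2)) :
    ∃ m n : ℤ, 0 < n ∧ n < m ∧ IsCoprime m n ∧ Odd (m + n) ∧
      y ^ 2 = 4 * (m * n * ((m + n) * (m - n))) := by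
  obtain ⟨c, d, hc, hd, hsum, hprod⟩ := exists_sq_add_sq_eq_and_two_mul_mul_eq hy hadd hsub
  have hcd : IsCoprime c d := by
    obtain ⟨s, t, hst⟩ : IsCoprime (x ^ 2) (y ^ 2) := hxy.pow
    exact ⟨s * c + 2 * t * d, s * d, by linear_combination hst + s * hsum + t * hprod⟩
  obtain ⟨m, n, hlegs, -, hmn, hpar⟩ := PythagoreanTriple.coprime_classification.1
    ⟨show c * c + d * d = x * x by linear_combination hsum, Int.isCoprime_iff_gcd_eq_one.1 hcd⟩
  have hpos : 0 < m * n ∧ 0 < m ^ 2 - n ^ 2 := by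
    rcases hlegs with ⟨rfl, rfl⟩ | ⟨rfl, rfl⟩ <;> constructor <;> linarith
  have habs : |m| * |n| = m * n := by rw [← abs_mul, abs_of_pos hpos.1]
  have hnm : |n| < |m| := sq_lt_sq.1 (by linarith)
  refine ⟨|m|, |n|, abs_pos.2 (right_ne_zero_of_mul hpos.1.ne'), hnm, ?_, ?_, ?_⟩
  · exact (Int.isCoprime_iff_gcd_eq_one.2 hmn).abs_abs
  · rw [Int.odd_add, odd_abs, even_abs, Int.odd_iff, Int.even_iff]
    omega
  · rw [habs, ← hprod, ← sq_sub_sq, sq_abs, sq_abs]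
    rcases hlegs with ⟨rfl, rfl⟩ | ⟨rfl, rfl⟩ <;> ring

lemma exists_natAbs_lt_of_isSquare_add_of_isSquare_sub {x y : ℤ} (hy : y ≠ 0)
    (hxy : IsCoprime x y) (hadd : IsSquare (x ^ 2 + y ^ 2)) (hsub : IsSquare (x ^ 2 - y ^ 2)) :
    ∃ x' y' : ℤ, y'.natAbs < y.natAbs ∧ y' ≠ 0 ∧ IsCoprime x' y' ∧
      IsSquare (x' ^ 2 + y' ^ 2) ∧ IsSquare (x' ^ 2 - y' ^ 2) := by
  obtain ⟨m, n, hn, hnm, hmn, hodd, hyeq⟩ := exists_eq_four_mul_mul_sq_sub_sq hy hxy hadd hsub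
  have hprod : IsSquare (m * n * ((m + n) * (m - n))) :=
    isSquare_of_isSquare_sq_mul_s4 two_ne_zero ⟨y, by linear_combination -hyeq⟩
  obtain ⟨⟨x', hx'⟩, ⟨y', hy'⟩, hadd', hsub'⟩ :=
    isSquare_of_isSquare_mul_mul_add_mul_sub hn hnm hmn hodd hprod
  rw [← sq] at hx' hy'
  rw [hx', hy'] at hadd' hsub'
  refine ⟨x', y', ?_, (pow_ne_zero_iff two_ne_zero).1 (hy' ▸ hn.ne'), ?_, hadd', hsub'⟩
  · rw [Int.natAbs_lt_iff_sq_lt, hyeq]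
    have hpos : 0 < m * ((m + n) * (m - n)) :=
      mul_pos (hn.trans hnm) (mul_pos (add_pos (hn.trans hnm) hn) (sub_pos.2 hnm))
    rw [← hy']
    linarith [le_mul_of_one_le_right hn.le hpos]
  · exact (IsCoprime.pow_iff two_pos two_pos).1 (hx' ▸ hy' ▸ hmn)

lemma not_isSquare_sq_sub_sq_of_isCoprime {x y : ℤ} (hy : y ≠ 0) (hxy : IsCoprime x y)
    (hadd : IsSquare (x ^ 2 + y ^ 2)) : ¬ IsSquare (x ^ 2 - y ^ 2) := by
  induction hN : y.natAbs using Nat.strong_induction_on generalizing x y with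
  | _ N ih =>
    subst hN
    intro hsub
    obtain ⟨x', y', hlt, hy', hxy', hadd', hsub'⟩ :=
      exists_natAbs_lt_of_isSquare_add_of_isSquare_sub hy hxy hadd hsub
    exact ih _ hlt hy' hxy' hadd' rfl hsub'

theorem not_isSquare_sq_sub_sq_of_isSquare_sq_add_sq {x y : ℤ} (hy : y ≠ 0)
    (hadd : IsSquare (x ^ 2 + y ^ 2)) : ¬ IsSquare (x ^ 2 - y ^ 2) := fun hsub ↦ by
  obtain ⟨g, x', y', hg, hxy', rfl, rfl⟩ :=
    Int.exists_gcd_one' (Int.gcd_pos_of_ne_zero_right x hy)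
  have hg' : (g : ℤ) ≠ 0 := by exact_mod_cast hg.ne'
  refine not_isSquare_sq_sub_sq_of_isCoprime (left_ne_zero_of_mul hy)
    (Int.isCoprime_iff_gcd_eq_one.2 hxy') (isSquare_of_isSquare_sq_mul_s4 hg' ?_)
    (isSquare_of_isSquare_sq_mul_s4 hg' ?_)
  · convert hadd using 1; ring
  · convert hsub using 1; ring

end Fermat

section Heron

variable {R : Type*} [CommRing R]

/-- The quartic form in Heron's formula: minus sixteen times the squared area of a triangle with
side lengths `x`, `y`, `z`. It is the squared irrational edge of the cuboids constructed here. -/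
def heronQuartic (x y z : R) : R :=
  (y ^ 2 + z ^ 2 - x ^ 2) ^ 2 - (2 * y * z) ^ 2

lemma heronQuartic_comm (x y z : R) : heronQuartic x y z = heronQuartic y x z := by
  unfold heronQuartic
  ring

lemma heronQuartic_rotate (x y z : R) : heronQuartic x y z = heronQuartic z x y := by
  unfold heronQuartic
  ring

lemma heronQuartic_eq_mul (x y z : R) :
    heronQuartic x y z = (x + y + z) * (x - y - z) * (x + y - z) * (x - y + z) := by
  unfold heronQuartic
  ring

lemma isSquare_sq_add_heronQuartic (x y z : R) : IsSquare ((2 * y * z) ^ 2 + heronQuartic x y z) :=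
  ⟨y ^ 2 + z ^ 2 - x ^ 2, by unfold heronQuartic; ring⟩

lemma heronQuartic_pos [LinearOrder R] [IsStrictOrderedRing R] {x y z : R} (hy : 0 < y)
    (hz : 0 < z) (h : y + z < x) : 0 < heronQuartic x y z := by
  rw [heronQuartic_eq_mul]
  refine mul_pos (mul_pos (mul_pos ?_ ?_) ?_) ?_ <;> linarith

lemma not_isSquare_heronQuartic {x y z : ℤ} (hx : x ≠ 0) (hy : y ≠ 0)
    (h : (y * z) ^ 2 + (x * z) ^ 2 = (x * y) ^ 2) : ¬ IsSquare (heronQuartic x y z) := by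
  rw [heronQuartic_rotate]
  refine not_isSquare_sq_sub_sq_of_isSquare_sq_add_sq (by positivity) ⟨x ^ 2 + y ^ 2 + z ^ 2, ?_⟩
  linear_combination -4 * h

end Heron

/-- An edge cuboid with integer edges `a`, `b` and irrational edge `√E`: all three face diagonals
and the space diagonal are integers. -/
structure IsEdgeCuboid (a b E : ℤ) : Prop where
  fst_pos : 0 < a
  snd_pos : 0 < b
  sq_pos : 0 < E
  not_isSquare : ¬ IsSquare E
  isSquare_sq_add_sq : IsSquare (a ^ 2 + b ^ 2)
  isSquare_fst_sq_add : IsSquare (a ^ 2 + E)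
  isSquare_snd_sq_add : IsSquare (b ^ 2 + E)
  isSquare_sq_add_sq_add : IsSquare (a ^ 2 + b ^ 2 + E)

theorem isEdgeCuboid_heronQuartic {x y z : ℤ} (hx : 0 < x) (hy : 0 < y) (hz : 0 < z)
    (h : (y * z) ^ 2 + (x * z) ^ 2 = (x * y) ^ 2) (hpos : 0 < heronQuartic x y z) :
    IsEdgeCuboid (2 * y * z) (2 * x * z) (heronQuartic x y z) where
  fst_pos := by positivity
  snd_pos := by positivity
  sq_pos := hpos
  not_isSquare := not_isSquare_heronQuartic hx.ne' hy.ne' h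
  isSquare_sq_add_sq := ⟨2 * x * y, by linear_combination 4 * h⟩
  isSquare_fst_sq_add := isSquare_sq_add_heronQuartic x y z
  isSquare_snd_sq_add := heronQuartic_comm x y z ▸ isSquare_sq_add_heronQuartic y x z
  isSquare_sq_add_sq_add := by
    have hdiag : (2 * y * z) ^ 2 + (2 * x * z) ^ 2 = (2 * x * y) ^ 2 := by
      linear_combination 4 * h
    rw [hdiag, heronQuartic_rotate]
    exact isSquare_sq_add_heronQuartic z x y

theorem exists_isEdgeCuboid_of_pythagoreanTriple {u v w : ℤ} (h : PythagoreanTriple u v w)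
    (hu : 0 < u) (hv : 0 < v) (hw : 0 < w)
    (hrange : v * w + u * v < u * w ∨ u * w + u * v < v * w) :
    ∃ a b E : ℤ, IsEdgeCuboid a b E ∧ a * v = b * u := by
  have hpos : 0 < heronQuartic (v * w) (u * w) (u * v) := by
    rcases hrange with hlt | hlt
    · rw [heronQuartic_comm]
      exact heronQuartic_pos (by positivity) (by positivity) hlt
    · exact heronQuartic_pos (by positivity) (by positivity) hlt
  have hdiag : (u * w * (u * v)) ^ 2 + (v * w * (u * v)) ^ 2 = (v * w * (u * w)) ^ 2 := by
    linear_combination (u * v * w) ^ 2 * h.eq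
  exact ⟨_, _, _, isEdgeCuboid_heronQuartic (by positivity) (by positivity) (by positivity)
    hdiag hpos, by ring⟩

theorem exists_edge_cuboid_with_edge_ratio_general
    (p q : ℤ) (hq : 0 < q) (hqp : q < p)
    (hrange : p ^ 4 - q ^ 4 > 4 * p ^ 3 * q ∨ p ^ 4 - q ^ 4 < 4 * p * q ^ 3) :
    ∃ a b E : ℤ, IsEdgeCuboid a b E ∧ a * (2 * p * q) = b * (p ^ 2 - q ^ 2) := by
  have hp : 0 < p := hq.trans hqp
  have htriple : PythagoreanTriple (p ^ 2 - q ^ 2) (2 * p * q) (p ^ 2 + q ^ 2) := by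
    unfold PythagoreanTriple
    ring
  have hlt : q ^ 2 < p ^ 2 := pow_lt_pow_left₀ hqp hq.le two_ne_zero
  exact exists_isEdgeCuboid_of_pythagoreanTriple htriple (sub_pos.2 hlt) (by positivity)
    (by positivity) (hrange.imp (fun h ↦ by linarith) (fun h ↦ by linarith))

/-- Theorem 2: for any admissible pair `(p,q)` with `p⁴−q⁴ > 4p³q` or `p⁴−q⁴ < 4pq³`,
there exists an edge cuboid whose integer edges are in the ratio `(p²−q²) : 2pq`. -/
theorem exists_edge_cuboid_with_edge_ratio
    (p q : ℤ) (hq : 0 < q) (hqp : q < p) (hcop : IsCoprime p q) (hpar : p % 2 ≠ q % 2)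
    (hrange : p ^ 4 - q ^ 4 > 4 * p ^ 3 * q ∨ p ^ 4 - q ^ 4 < 4 * p * q ^ 3) :
    ∃ a b E : ℤ, 0 < a ∧ 0 < b ∧ 0 < E ∧ ¬ IsSquare E ∧
      a * (2 * p * q) = b * (p ^ 2 - q ^ 2) ∧
      IsSquare (a ^ 2 + b ^ 2) ∧ IsSquare (a ^ 2 + E) ∧ IsSquare (b ^ 2 + E) ∧
      IsSquare (a ^ 2 + b ^ 2 + E) := by
  obtain ⟨a, b, E, ⟨ha, hb, hE, hsq, hab, haE, hbE, habE⟩, hratio⟩ :=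
    exists_edge_cuboid_with_edge_ratio_general p q hq hqp hrange
  exact ⟨a, b, E, ha, hb, hE, hsq, hratio, hab, haE, hbE, habE⟩
end
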